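/- arXiv:2602.19989 — 4 statements merged into one kernel-verified Lean document; each statement's English description precedes it below -/
import Mathlib

section
/- There exist an absolute constant c > 0 and a threshold p_0 such that for every prime p ≥ p_0, every subset A ⊆ ℤ_p \ {0} with |A| ≤ exp(c·(log p)^{1/4}) is sequenceable. -/
/-- A list `l` (an ordering of a finite set) is a *sequencing* if its partial sums
`p_i = l_1 + ⋯ + l_i` (for `1 ≤ i ≤ |l|`) are pairwise distinct, and moreover
`p_i ≠ 0` for every `1 ≤ i ≤ |l| - 1`. -/
def IsSequencing {G : Type*} [AddCommGroup G] (l : List G) : Prop :=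
  (∀ i j : ℕ, 1 ≤ i → i < j → j ≤ l.length → (l.take i).sum ≠ (l.take j).sum) ∧
  (∀ i : ℕ, 1 ≤ i → i ≤ l.length - 1 → (l.take i).sum ≠ 0)

/-- A finite subset `A` of an abelian group is *sequenceable* if some ordering of its
elements is a sequencing. -/
def Sequenceable {G : Type*} [AddCommGroup G] [DecidableEq G] (A : Finset G) : Prop :=
  ∃ l : List G, l.Nodup ∧ l.toFinset = A ∧ IsSequencing l


/-- No proper nonempty segment sums to zero. -/
def SegOK {G : Type*} [AddCommGroup G] (l : List G) : Prop :=
  ∀ l1 l2 l3 : List G, l = l1 ++ l2 ++ l3 → l2 ≠ [] → (l1 ≠ [] ∨ l3 ≠ []) → l2.sum ≠ 0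

theorem SegOK.isSeq {G : Type*} [AddCommGroup G] {l : List G} (h : SegOK l) :
    IsSequencing l := by
  refine ⟨fun i j hi hij hj heq => ?_, fun i hi hil => ?_⟩
  · have e1 : l.take j = l.take i ++ (l.take j).drop i := by
      conv_lhs => rw [← List.take_append_drop i (l.take j)]
      rw [List.take_take, min_eq_left hij.le]
    have e2 : l = l.take i ++ (l.take j).drop i ++ l.drop j := by
      rw [← e1, List.take_append_drop]
    refine h _ _ _ e2 ?_ (Or.inl ?_) ?_
    · intro h0
      have := congrArg List.length h0
      simp at this
      omega
    · intro h0
      have := congrArg List.length h0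
      simp at this
      grind
    · rw [e1, List.sum_append] at heq
      simpa using heq
  · refine h [] (l.take i) (l.drop i) (by simp) ?_ (Or.inr ?_)
    · intro h0
      have := congrArg List.length h0
      simp at this
      grind
    · intro h0
      have := congrArg List.length h0
      simp at this
      omega

theorem grass : ∀ (n : ℕ) (S M : Finset ℤ), S.card = n → (∀ a ∈ S, 0 < a) →
    M.card ≤ S.card - 1 → (∑ a ∈ S, a) ∉ M →
    ∃ l : List ℤ, l.Nodup ∧ l.toFinset = S ∧ ∀ q, q ≠ [] → q <+: l → q.sum ∉ M := by
  intro n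
  induction n using Nat.strong_induction_on with
  | _ n ih =>
  intro S M hn hpos hM hs
  have hsumpos : ∀ l : List ℤ, (∀ x ∈ l, x ∈ S) → l ≠ [] → 0 < l.sum := by
    intro l hl hne
    exact List.sum_pos _ (fun x hx => hpos x (hl x hx)) hne
  have hsumnn : ∀ l : List ℤ, (∀ x ∈ l, x ∈ S) → 0 ≤ l.sum := by
    intro l hl
    exact List.sum_nonneg (fun x hx => (hpos x (hl x hx)).le)
  rcases S.eq_empty_or_nonempty with rfl | hne
  · refine ⟨[], by simp, by simp, ?_⟩
    intro q hq hq'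
    simp at hq'
    exact absurd hq' hq
  obtain ⟨a, haS, hamax⟩ := S.exists_max_image id hne
  simp only [id] at hamax
  have hc1 : (S.erase a).card = S.card - 1 := Finset.card_erase_of_mem haS
  have hcpos : 0 < S.card := Finset.card_pos.mpr hne
  have hsum1 : a + ∑ x ∈ S.erase a, x = ∑ x ∈ S, x := Finset.add_sum_erase S (fun x => x) haS
  by_cases hd : ∃ d ∈ M, d < a
  · obtain ⟨d, hdM, hda⟩ := hd
    have hMpos : 0 < M.card := Finset.card_pos.mpr ⟨d, hdM⟩
    have hcM : (M.erase d).card = M.card - 1 := Finset.card_erase_of_mem hdM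
    by_cases haM : a ∈ M
    · have hex : ∃ b ∈ S.erase a, b ∉ M ∧ a + b ∉ M := by
        by_contra hcon
        push Not at hcon
        have : (S.erase a).card ≤ (M.erase a).card := by
          refine Finset.card_le_card_of_injOn (fun b => if b ∈ M then b else a + b) ?_ ?_
          · intro b hb
            have hb' := Finset.mem_erase.mp (Finset.mem_coe.mp hb)
            have := hpos b hb'.2
            simp only [Finset.coe_erase, Set.mem_sdiff, Finset.mem_coe, Set.mem_singleton_iff]
            split_ifs with h
            · exact ⟨h, hb'.1⟩
            · exact ⟨hcon b hb h, by omega⟩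
          · intro b hb c hc hbc
            have hb' := Finset.mem_erase.mp (Finset.mem_coe.mp hb)
            have hc' := Finset.mem_erase.mp (Finset.mem_coe.mp hc)
            have := hpos b hb'.2
            have := hpos c hc'.2
            have := hamax b hb'.2
            have := hamax c hc'.2
            have := hb'.1
            have := hc'.1
            simp only at hbc
            split_ifs at hbc <;> omega
        rw [hc1, Finset.card_erase_of_mem haM] at this
        omega
      obtain ⟨b, hb, hbM, habM⟩ := hex
      have hb' := Finset.mem_erase.mp hb
      have hbpos := hpos b hb'.2
      have hapos := hpos a haS
      have hc2 : ((S.erase a).erase b).card = S.card - 1 - 1 := by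
        rw [Finset.card_erase_of_mem hb, hc1]
      have hsum2 : b + ∑ x ∈ (S.erase a).erase b, x = ∑ x ∈ S.erase a, x :=
        Finset.add_sum_erase _ (fun x => x) hb
      have haM' : a ∈ M.erase d := Finset.mem_erase.mpr ⟨by omega, haM⟩
      have hcM2 : ((M.erase d).erase a).card = M.card - 1 - 1 := by
        rw [Finset.card_erase_of_mem haM', hcM]
      have hsc2 : 2 ≤ S.card := by
        have := Finset.card_pos.mpr ⟨b, hb⟩
        omega
      obtain ⟨l, hl1, hl2, hl3⟩ := ih (S.card - 1 - 1) (by omega) ((S.erase a).erase b)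
        (((M.erase d).erase a).image (fun x => x - (a + b))) hc2
        (fun x hx => hpos x (Finset.mem_of_mem_erase (Finset.mem_of_mem_erase hx)))
        (by
          have := Finset.card_image_le (s := (M.erase d).erase a) (f := fun x => x - (a + b))
          have h3 : 1 < M.card := Finset.one_lt_card.mpr ⟨a, haM, d, hdM, by omega⟩
          omega)
        (by
          intro hmem
          obtain ⟨y, hy, hy2⟩ := Finset.mem_image.mp hmem
          have hyM := Finset.mem_of_mem_erase (Finset.mem_of_mem_erase hy)
          apply hs
          have : y = ∑ x ∈ S, x := by linarith
          rwa [← this])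
      have hlS : ∀ x ∈ l, x ∈ (S.erase a).erase b := fun x hx => by
        rw [← hl2]; simpa using hx
      refine ⟨b :: a :: l, ?_, ?_, ?_⟩
      · refine List.nodup_cons.mpr ⟨?_, List.nodup_cons.mpr ⟨?_, hl1⟩⟩
        · simp only [List.mem_cons, not_or]
          exact ⟨hb'.1, fun h => by simpa using hlS b h⟩
        · exact fun h => by simpa using hlS a h
      · simp only [List.toFinset_cons, hl2]
        rw [Finset.insert_comm, Finset.insert_erase hb, Finset.insert_erase haS]
      · intro q hq hql
        rcases List.prefix_cons_iff.mp hql with rfl | ⟨t, rfl, ht⟩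
        · exact absurd rfl hq
        rcases List.prefix_cons_iff.mp ht with rfl | ⟨t, rfl, ht'⟩
        · simpa using hbM
        by_cases ht0 : t = []
        · subst ht0
          simpa [add_comm] using habM
        · have h1 := hl3 t ht0 ht'
          have htp := hsumpos t (fun x hx =>
            Finset.mem_of_mem_erase (Finset.mem_of_mem_erase (hlS x (ht'.subset hx)))) ht0
          intro hmem
          simp only [List.sum_cons] at hmem
          apply h1
          refine Finset.mem_image.mpr ⟨_, Finset.mem_erase.mpr ⟨?_, Finset.mem_erase.mpr ⟨?_, hmem⟩⟩, ?_⟩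
          · omega
          · omega
          · ring
    · obtain ⟨l, hl1, hl2, hl3⟩ := ih (S.card - 1) (by omega) (S.erase a)
        ((M.erase d).image (fun x => x - a)) hc1
        (fun x hx => hpos x (Finset.mem_of_mem_erase hx))
        (by
          have := Finset.card_image_le (s := M.erase d) (f := fun x => x - a)
          omega)
        (by
          intro hmem
          obtain ⟨y, hy, hy2⟩ := Finset.mem_image.mp hmem
          have hyM := Finset.mem_of_mem_erase hy
          apply hs
          have : y = ∑ x ∈ S, x := by linarith
          rwa [← this])
      have hlS : ∀ x ∈ l, x ∈ S.erase a := fun x hx => by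
        rw [← hl2]; simpa using hx
      refine ⟨a :: l, ?_, ?_, ?_⟩
      · exact List.nodup_cons.mpr ⟨fun h => by simpa using hlS a h, hl1⟩
      · simp only [List.toFinset_cons, hl2]
        rw [Finset.insert_erase haS]
      · intro q hq hql
        rcases List.prefix_cons_iff.mp hql with rfl | ⟨t, rfl, ht⟩
        · exact absurd rfl hq
        by_cases ht0 : t = []
        · subst ht0
          simpa using haM
        · have h1 := hl3 t ht0 ht
          have htp := hsumpos t (fun x hx => Finset.mem_of_mem_erase (hlS x (ht.subset hx))) ht0
          intro hmem
          simp only [List.sum_cons] at hmem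
          apply h1
          refine Finset.mem_image.mpr ⟨_, Finset.mem_erase.mpr ⟨?_, hmem⟩, ?_⟩
          · omega
          · ring
  · push Not at hd
    rcases M.eq_empty_or_nonempty with rfl | hMne
    · exact ⟨S.toList, S.nodup_toList, S.toList_toFinset, by simp⟩
    obtain ⟨d, hdM, hdmin⟩ := M.exists_min_image id hMne
    simp only [id] at hdmin
    have hcM : (M.erase d).card = M.card - 1 := Finset.card_erase_of_mem hdM
    have hMpos : 0 < M.card := Finset.card_pos.mpr ⟨d, hdM⟩
    obtain ⟨l, hl1, hl2, hl3⟩ := ih (S.card - 1) (by omega) (S.erase a)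
        ((M.erase d).image (fun x => x - a)) hc1
        (fun x hx => hpos x (Finset.mem_of_mem_erase hx))
        (by
          have := Finset.card_image_le (s := M.erase d) (f := fun x => x - a)
          omega)
        (by
          intro hmem
          obtain ⟨y, hy, hy2⟩ := Finset.mem_image.mp hmem
          have hyM := Finset.mem_of_mem_erase hy
          apply hs
          have : y = ∑ x ∈ S, x := by linarith
          rwa [← this])
    have hlS : ∀ x ∈ l, x ∈ S.erase a := fun x hx => by
      rw [← hl2]; simpa using hx
    have hlS' : ∀ x ∈ l, x ∈ S := fun x hx => Finset.mem_of_mem_erase (hlS x hx)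
    have hal : a ∉ l := fun h => by simpa using hlS a h
    have key : ∀ t, t ≠ [] → t <+: l → a + t.sum ∉ M.erase d := by
      intro t ht0 ht hmem
      exact hl3 t ht0 ht (Finset.mem_image.mpr ⟨_, hmem, by ring⟩)
    by_cases hsplit : ∃ l1 l2, l = l1 ++ l2 ∧ a + l1.sum = d
    · obtain ⟨l1, l2, rfl, hsd⟩ := hsplit
      cases l2 with
      | nil =>
        exfalso
        apply hs
        rw [← hsum1, ← hl2]
        rw [List.sum_toFinset _ hl1]
        simpa [hsd] using hdM
      | cons c l3 =>
        have hcS : c ∈ S.erase a := hlS c (by simp)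
        have hca : c < a := by
          have h1 := hamax c (Finset.mem_of_mem_erase hcS)
          have h2 := (Finset.mem_erase.mp hcS).1
          omega
        have hcpos := hpos c (Finset.mem_of_mem_erase hcS)
        have hperm : (l1 ++ c :: a :: l3).Perm (a :: (l1 ++ c :: l3)) := by
          have : l1 ++ c :: a :: l3 = (l1 ++ [c]) ++ a :: l3 := by simp
          rw [this]
          refine List.perm_middle.trans ?_
          simp
        refine ⟨l1 ++ c :: a :: l3, ?_, ?_, ?_⟩
        · rw [hperm.nodup_iff]
          exact List.nodup_cons.mpr ⟨hal, hl1⟩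
        · rw [List.toFinset_eq_of_perm _ _ hperm, List.toFinset_cons, hl2,
            Finset.insert_erase haS]
        · intro q hq hql hqM
          obtain ⟨r0, hr0⟩ := hql
          rcases List.append_eq_append_iff.mp hr0 with ⟨r, rfl, -⟩ | ⟨t, rfl, ht0⟩
          · have h1 := hsumnn r (fun x hx => hlS' x (by simp [hx]))
            simp only [List.sum_append] at hsd
            have := hdmin _ hqM
            have := hpos a haS
            omega
          · have ht : t <+: c :: a :: l3 := ⟨r0, ht0.symm⟩
            rcases List.prefix_cons_iff.mp ht with rfl | ⟨t, rfl, ht1⟩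
            · have := hdmin _ hqM
              simp at this
              have := hpos a haS
              omega
            rcases List.prefix_cons_iff.mp ht1 with rfl | ⟨t, rfl, ht'⟩
            · have := hdmin _ hqM
              simp at this
              omega
            have h1 : l1 ++ c :: t <+: l1 ++ c :: l3 := by
              rw [List.prefix_append_right_inj]
              exact (List.prefix_cons_inj c).mpr ht'
            have h2 := key _ (by simp) h1
            have h3 := hsumnn t (fun x hx => hlS' x (by simp [ht'.subset hx]))
            apply h2
            simp only [List.sum_append, List.sum_cons] at hqM ⊢
            refine Finset.mem_erase.mpr ⟨by omega, ?_⟩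
            convert hqM using 1
            ring
    · push Not at hsplit
      refine ⟨a :: l, ?_, ?_, ?_⟩
      · exact List.nodup_cons.mpr ⟨hal, hl1⟩
      · simp only [List.toFinset_cons, hl2]
        rw [Finset.insert_erase haS]
      · intro q hq hql
        rcases List.prefix_cons_iff.mp hql with rfl | ⟨t, rfl, ht⟩
        · exact absurd rfl hq
        intro hmem
        rw [List.sum_cons] at hmem
        obtain ⟨r, hr⟩ := ht
        have h1 := hsplit t r hr.symm
        by_cases ht0 : t = []
        · subst ht0
          apply h1
          have := hdmin _ hmem
          have := hd d hdM
          simp at *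
          omega
        · exact key t ht0 ⟨r, hr⟩ (Finset.mem_erase.mpr ⟨h1, hmem⟩)


theorem sum_map_neg_int (l : List ℤ) : (l.map (fun x => -x)).sum = -l.sum := by
  induction l with
  | nil => simp
  | cons a t ih => simp only [List.map_cons, List.sum_cons, ih]; ring

theorem int_seq_aux (S : Finset ℤ) (h0 : (0 : ℤ) ∉ S)
    (hb : ((∑ a ∈ S, a) ≤ 0 ∧ (S.filter (· < 0)).card ≤ (S.filter (0 < ·)).card) ∨
      (S.filter (· < 0)).card < (S.filter (0 < ·)).card) :
    ∃ l : List ℤ, l.Nodup ∧ l.toFinset = S ∧ SegOK l := by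
  rcases S.eq_empty_or_nonempty with rfl | hne
  · refine ⟨[], by simp, by simp, ?_⟩
    intro l1 l2 l3 h h2
    simp at h
    exact absurd h.2.1 h2
  set P := S.filter (0 < ·) with hP
  set N := (S.filter (· < 0)).image (fun x => -x) with hN
  have hNc : N.card = (S.filter (· < 0)).card :=
    Finset.card_image_of_injective _ neg_injective
  rw [← hNc] at hb
  have hPpos : ∀ a ∈ P, 0 < a := fun a ha => (Finset.mem_filter.mp ha).2
  have hNpos : ∀ a ∈ N, 0 < a := by
    intro a ha
    obtain ⟨x, hx, rfl⟩ := Finset.mem_image.mp ha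
    have := (Finset.mem_filter.mp hx).2
    omega
  have hunion : S = (S.filter (· < 0)) ∪ P := by
    ext x
    simp only [hP, Finset.mem_union, Finset.mem_filter]
    constructor
    · intro hx
      rcases lt_trichotomy x 0 with h | h | h
      · exact Or.inl ⟨hx, h⟩
      · subst h; exact absurd hx h0
      · exact Or.inr ⟨hx, h⟩
    · rintro (h | h) <;> exact h.1
  have hdisj : Disjoint (S.filter (· < 0)) P := by
    rw [Finset.disjoint_left]
    intro x hx hx'
    have := (Finset.mem_filter.mp hx).2
    have := hPpos x hx'
    omega
  have hPne : P.Nonempty := by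
    rw [← Finset.card_pos]
    have : S.card = (S.filter (· < 0)).card + P.card := by
      conv_lhs => rw [hunion]
      exact Finset.card_union_of_disjoint hdisj
    have := Finset.card_pos.mpr hne
    omega
  have hPsum : 0 < ∑ a ∈ P, a := Finset.sum_pos hPpos hPne
  have hNsum : ∑ a ∈ N, a = - ∑ a ∈ S.filter (· < 0), a := by
    rw [hN, Finset.sum_image (fun x _ y _ h => neg_injective h), Finset.sum_neg_distrib]
  have hSsum : ∑ a ∈ S, a = ∑ a ∈ P, a - ∑ a ∈ N, a := by
    conv_lhs => rw [hunion]
    rw [Finset.sum_union hdisj, hNsum]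
    ring
  obtain ⟨lN, hN1, hN2, hN3⟩ := grass N.card N
    (if 2 ≤ N.card then {-∑ a ∈ S, a} else ∅) rfl hNpos
    (by split_ifs with h
        · simp; omega
        · simp)
    (by split_ifs with h
        · simp only [Finset.mem_singleton]; omega
        · simp)
  have hlenN : lN.length = N.card := by rw [← hN2, List.toFinset_card_of_nodup hN1]
  have hmemN : ∀ x ∈ lN, 0 < x := fun x hx => hNpos x (by rw [← hN2]; simpa using hx)
  have hsumN : lN.sum = ∑ a ∈ N, a := by
    rw [← hN2, List.sum_toFinset _ hN1]; simp
  set M0 : Finset ℤ := (Finset.range (N.card - 1)).image (fun j => (lN.drop (j + 1)).sum) with hM0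
  have hM0c : M0.card ≤ N.card - 1 := by
    have := Finset.card_image_le (s := Finset.range (N.card - 1))
      (f := fun j => (lN.drop (j + 1)).sum)
    simpa using this
  have hM0mem : ∀ u r, u ≠ [] → r ≠ [] → lN = u ++ r → r.sum ∈ M0 := by
    intro u r hu hr he
    have h1 : 0 < u.length := List.length_pos_iff.mpr hu
    have h2 : 0 < r.length := List.length_pos_iff.mpr hr
    have h3 : lN.length = u.length + r.length := by rw [he]; simp
    refine Finset.mem_image.mpr ⟨u.length - 1, Finset.mem_range.mpr (by omega), ?_⟩
    rw [show u.length - 1 + 1 = u.length by omega, he, List.drop_left]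
  have hM0s : ∀ x ∈ M0, ∃ u r, u ≠ [] ∧ r ≠ [] ∧ lN = u ++ r ∧ r.sum = x := by
    intro x hx
    obtain ⟨j, hj, rfl⟩ := Finset.mem_image.mp hx
    have hj := Finset.mem_range.mp hj
    refine ⟨lN.take (j + 1), lN.drop (j + 1), ?_, ?_, by simp, rfl⟩
    · intro h
      have := congrArg List.length h
      simp at this
      subst this
      simp at hlenN
      omega
    · intro h
      have := congrArg List.length h
      simp at this
      omega
  have hPM0 : (∑ a ∈ P, a) ∉ M0 := by
    intro hmem
    obtain ⟨u, r, hu, hr, he, hrs⟩ := hM0s _ hmem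
    have hc : 2 ≤ N.card := by
      have h1 : 0 < u.length := List.length_pos_iff.mpr hu
      have h2 : 0 < r.length := List.length_pos_iff.mpr hr
      have h3 : lN.length = u.length + r.length := by rw [he]; simp
      omega
    have := hN3 u hu ⟨r, he.symm⟩
    rw [if_pos hc, Finset.mem_singleton] at this
    apply this
    have h5 : u.sum + r.sum = ∑ a ∈ N, a := by rw [← hsumN, he, List.sum_append]
    omega
  obtain ⟨lP, hP1, hP2, hP3⟩ := grass P.card P
    (if (∑ a ∈ S, a) ≤ 0 ∨ N.card = 0 then M0 else insert (∑ a ∈ N, a) M0) rfl hPpos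
    (by
      have hPc := Finset.card_pos.mpr hPne
      split_ifs with h
      · omega
      · have := Finset.card_insert_le (∑ a ∈ N, a) M0
        push Not at h
        rcases hb with hb | hb <;> omega)
    (by
      split_ifs with h
      · exact hPM0
      · rw [Finset.mem_insert, not_or]
        exact ⟨by omega, hPM0⟩)
  have hmemP : ∀ x ∈ lP, 0 < x := fun x hx => hPpos x (by rw [← hP2]; simpa using hx)
  have hsumP : lP.sum = ∑ a ∈ P, a := by
    rw [← hP2, List.sum_toFinset _ hP1]; simp
  have hP4 : ∀ q, q ≠ [] → q <+: lP → q.sum ∉ M0 := by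
    intro q hq hq' hm
    refine hP3 q hq hq' ?_
    split_ifs
    · exact hm
    · exact Finset.mem_insert_of_mem hm
  refine ⟨lN.map (fun x => -x) ++ lP, ?_, ?_, ?_⟩
  · rw [List.nodup_append]
    refine ⟨hN1.map neg_injective, hP1, ?_⟩
    intro x hx y hy hxy
    obtain ⟨z, hz, rfl⟩ := List.mem_map.mp hx
    have := hmemN z hz
    have := hmemP y hy
    omega
  · rw [List.toFinset_append, hP2]
    conv_rhs => rw [hunion]
    congr 1
    ext x
    simp only [List.mem_toFinset, List.mem_map]
    have : ∀ y, y ∈ lN ↔ y ∈ N := fun y => by rw [← hN2]; simp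
    simp only [this, hN, Finset.mem_image]
    constructor
    · rintro ⟨y, ⟨z, hz, rfl⟩, rfl⟩
      simpa using hz
    · intro hx
      exact ⟨-x, ⟨x, hx, rfl⟩, by simp⟩
  · intro l1 l2 l3 he hl2 h13
    have hneg : ∀ q : List ℤ, (∀ x ∈ q, x ∈ lN.map (fun x => -x)) → q ≠ [] → q.sum < 0 := by
      intro q hq hq0
      have h1 : 0 < (q.map (fun x => -x)).sum := by
        apply List.sum_pos
        · intro x hx
          obtain ⟨y, hy, rfl⟩ := List.mem_map.mp hx
          obtain ⟨z, hz, hzy⟩ := List.mem_map.mp (hq y hy)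
          have := hmemN z hz
          omega
        · simpa using hq0
      rw [sum_map_neg_int] at h1
      simp at h1
      exact h1
    have hposs : ∀ q : List ℤ, (∀ x ∈ q, x ∈ lP) → q ≠ [] → 0 < q.sum := by
      intro q hq hq0
      exact List.sum_pos _ (fun x hx => hmemP x (hq x hx)) hq0
    rcases List.append_eq_append_iff.mp he with ⟨as, h1, h2⟩ | ⟨bs, h1, h2⟩
    · rcases List.append_eq_append_iff.mp h1 with ⟨cs, h3, h4⟩ | ⟨cs, h3, h4⟩
      · -- l2 = cs ++ as
        subst h4
        by_cases hc : cs = []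
        · subst hc
          refine (hposs _ ?_ hl2).ne'
          intro x hx
          rw [h2]
          simp at hx
          simp [hx]
        by_cases ha : as = []
        · subst ha
          refine (hneg _ ?_ hl2).ne
          intro x hx
          rw [h3]
          simp at hx
          simp [hx]
        obtain ⟨u, r, hur, hu, hr⟩ := List.map_eq_append_iff.mp h3
        have hr0 : r ≠ [] := by rintro rfl; simp at hr; exact hc hr
        have hcs : cs.sum = - r.sum := by
          rw [← hr, sum_map_neg_int]
        intro hz
        rw [List.sum_append, hcs] at hz
        have hz' : as.sum = r.sum := by omega
        by_cases hl1 : l1 = []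
        · have hu0 : u = [] := by rw [hl1] at hu; simpa using hu
          subst hu0
          have hr' : r.sum = ∑ a ∈ N, a := by rw [← hsumN, hur]; simp
          have hl3 : l3 ≠ [] := by
            rcases h13 with h | h
            · exact absurd hl1 h
            · exact h
          have h3p := hposs l3 (fun x hx => by rw [h2]; simp [hx]) hl3
          have hsp : as.sum + l3.sum = ∑ a ∈ P, a := by rw [← hsumP, h2, List.sum_append]
          have := hP3 as ha ⟨l3, h2.symm⟩
          have hNne : N.card ≠ 0 := by
            rw [← hlenN, hur]
            simpa using hr0
          rw [if_neg (by push Not; exact ⟨by omega, hNne⟩)] at this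
          apply this
          rw [hz', hr']
          exact Finset.mem_insert_self _ _
        · have hu0 : u ≠ [] := by rintro rfl; simp at hu; exact hl1 hu
          refine hP4 as ha ⟨l3, h2.symm⟩ ?_
          rw [hz']
          exact hM0mem u r hu0 hr0 hur
      · refine (hposs l2 ?_ hl2).ne'
        intro x hx
        rw [h2, h4]
        simp [hx]
    · refine (hneg l2 ?_ hl2).ne
      intro x hx
      have : x ∈ l1 ++ l2 := by simp [hx]
      rw [h1]
      simp only [List.mem_append] at *
      tauto

theorem SegOK.map_neg {l : List ℤ} (h : SegOK l) : SegOK (l.map (fun x => -x)) := by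
  intro l1 l2 l3 he h2 h13
  obtain ⟨u, v, rfl, hu, rfl⟩ := List.map_eq_append_iff.mp he
  obtain ⟨a, b, rfl, rfl, rfl⟩ := List.map_eq_append_iff.mp hu
  rw [sum_map_neg_int]
  have := h a b v rfl (by simpa using h2) (by simpa using h13)
  simpa using this

theorem int_seq (S : Finset ℤ) (h0 : (0 : ℤ) ∉ S) :
    ∃ l : List ℤ, l.Nodup ∧ l.toFinset = S ∧ SegOK l := by
  by_cases hb : ((∑ a ∈ S, a) ≤ 0 ∧ (S.filter (· < 0)).card ≤ (S.filter (0 < ·)).card) ∨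
      (S.filter (· < 0)).card < (S.filter (0 < ·)).card
  · exact int_seq_aux S h0 hb
  · push Not at hb
    set S' := S.image (fun x => -x) with hS'
    have hc1 : (S'.filter (· < 0)).card = (S.filter (0 < ·)).card := by
      rw [hS', Finset.filter_image, Finset.card_image_of_injective _ neg_injective]
      simp
    have hc2 : (S'.filter (0 < ·)).card = (S.filter (· < 0)).card := by
      rw [hS', Finset.filter_image, Finset.card_image_of_injective _ neg_injective]
      simp
    have hs : ∑ a ∈ S', a = - ∑ a ∈ S, a := by
      rw [hS', Finset.sum_image (fun x _ y _ h => neg_injective h), Finset.sum_neg_distrib]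
    obtain ⟨l, h1, h2, h3⟩ := int_seq_aux S' (by simpa [hS'] using h0) (by
      rw [hc1, hc2, hs]
      by_cases h : (∑ a ∈ S, a) ≤ 0
      · right
        exact hb.1 h
      · left
        constructor <;> omega)
    refine ⟨l.map (fun x => -x), h1.map neg_injective, ?_, h3.map_neg⟩
    ext x
    have : ∀ y, y ∈ l ↔ y ∈ S' := fun y => by rw [← h2]; simp
    simp [this, hS']


/-- `S` is dissociated modulo `H`. -/
def Diss {G : Type*} [AddCommGroup G] (H : Set G) (S : Finset G) : Prop :=
  ∀ B, B ⊆ S → ∀ C, C ⊆ S → (∑ x ∈ B, x) - (∑ x ∈ C, x) ∈ H → B = C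

theorem Diss.mono {G : Type*} [AddCommGroup G] {H : Set G} {S T : Finset G}
    (h : Diss H S) (hT : T ⊆ S) : Diss H T :=
  fun B hB C hC hh => h B (hB.trans hT) C (hC.trans hT) hh

theorem Diss.monoH {G : Type*} [AddCommGroup G] {H H' : Set G} {S : Finset G}
    (h : Diss H S) (hT : H' ⊆ H) : Diss H' S :=
  fun B hB C hC hh => h B hB C hC (hT hh)

theorem Diss.empty {G : Type*} [AddCommGroup G] {H : Set G} : Diss H (∅ : Finset G) := by
  intro B hB C hC _
  rw [Finset.subset_empty.mp hB, Finset.subset_empty.mp hC]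

theorem Diss.sum_notMem {G : Type*} [AddCommGroup G] {H : Set G} {S B : Finset G}
    (h : Diss H S) (hB : B ⊆ S) (hne : B.Nonempty) : (∑ x ∈ B, x) ∉ H := by
  intro hm
  have := h B hB ∅ (Finset.empty_subset _) (by simpa using hm)
  exact hne.ne_empty this

theorem exists_maxP {G : Type*} [DecidableEq G] (P : Finset G → Prop) (h0 : P ∅) (A : Finset G) :
    ∃ Q, Q ⊆ A ∧ P Q ∧ ∀ a ∈ A, a ∉ Q → ¬ P (insert a Q) := by
  classical
  obtain ⟨Q, hQ, hmax⟩ := (A.powerset.filter P).exists_max_image Finset.card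
    ⟨∅, by simp [h0]⟩
  simp only [Finset.mem_filter, Finset.mem_powerset] at hQ hmax
  refine ⟨Q, hQ.1, hQ.2, fun a ha haQ hP => ?_⟩
  have := hmax (insert a Q) ⟨Finset.insert_subset ha hQ.1, hP⟩
  rw [Finset.card_insert_of_notMem haQ] at this
  omega

theorem span_aux {G : Type*} [AddCommGroup G] [DecidableEq G] {Q B C : Finset G} {a : G}
    (hB : B ⊆ insert a Q) (hC : C ⊆ insert a Q) (haB : a ∈ B) (haC : a ∉ C) :
    ∃ c : G → ℤ, (∀ u, |c u| ≤ 1) ∧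
      a = ∑ u ∈ Q, c u • u + ((∑ x ∈ B, x) - (∑ x ∈ C, x)) := by
  refine ⟨fun u => (if u ∈ C then 1 else 0) - (if u ∈ B.erase a then 1 else 0), ?_, ?_⟩
  · intro u
    dsimp only
    split_ifs <;> simp
  · have hC' : C ⊆ Q := fun x hx => by
      rcases Finset.mem_insert.mp (hC hx) with h | h
      · subst h; exact absurd hx haC
      · exact h
    have hB' : B.erase a ⊆ Q := fun x hx => by
      rw [Finset.mem_erase] at hx
      rcases Finset.mem_insert.mp (hB hx.2) with h | h
      · exact absurd h hx.1
      · exact h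
    have h1 : a + ∑ x ∈ B.erase a, x = ∑ x ∈ B, x := Finset.add_sum_erase B (fun x => x) haB
    have key : ∀ E : Finset G, E ⊆ Q → ∑ u ∈ Q, (if u ∈ E then (1 : ℤ) else 0) • u = ∑ u ∈ E, u := by
      intro E hE
      simp only [ite_smul, one_smul, zero_smul]
      rw [← Finset.sum_filter, Finset.filter_mem_eq_inter, Finset.inter_eq_right.mpr hE]
    simp only [sub_smul, Finset.sum_sub_distrib]
    rw [key C hC', key _ hB', ← h1]
    abel

theorem span_of {G : Type*} [AddCommGroup G] [DecidableEq G] {H : Set G}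
    (hneg : ∀ x ∈ H, -x ∈ H) (h0 : (0 : G) ∈ H)
    {Q : Finset G} (hQ : Diss H Q) {a : G} (ha : a ∉ Q → ¬ Diss H (insert a Q)) :
    ∃ c : G → ℤ, (∀ u, |c u| ≤ 1) ∧ ∃ h ∈ H, a = ∑ u ∈ Q, c u • u + h := by
  by_cases haQ : a ∈ Q
  · obtain ⟨c, hc, h⟩ := span_aux (Q := Q) (B := {a}) (C := ∅) (a := a) (by simp) (by simp)
      (by simp) (by simp)
    refine ⟨fun u => if u = a then 1 else 0, ?_, 0, h0, ?_⟩
    · intro u; dsimp only; split_ifs <;> simp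
    · simp [haQ]
  · have := ha haQ
    unfold Diss at this
    push Not at this
    obtain ⟨B, hB, C, hC, hH, hne⟩ := this
    by_cases haB : a ∈ B <;> by_cases haC : a ∈ C
    · exfalso
      apply hne
      have h1 : a + ∑ x ∈ B.erase a, x = ∑ x ∈ B, x := Finset.add_sum_erase B (fun x => x) haB
      have h2 : a + ∑ x ∈ C.erase a, x = ∑ x ∈ C, x := Finset.add_sum_erase C (fun x => x) haC
      have := hQ (B.erase a) (by rw [← Finset.subset_insert_iff]; exact hB) (C.erase a)
        (by rw [← Finset.subset_insert_iff]; exact hC) (by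
          rw [← h1, ← h2] at hH
          simpa using hH)
      rw [← Finset.insert_erase haB, this, Finset.insert_erase haC]
    · obtain ⟨c, hc, h⟩ := span_aux hB hC haB haC
      exact ⟨c, hc, _, hH, h⟩
    · obtain ⟨c, hc, h⟩ := span_aux hC hB haC haB
      refine ⟨c, hc, _, ?_, h⟩
      have := hneg _ hH
      simpa using this
    · exfalso
      apply hne
      refine hQ B ?_ C ?_ hH
      · exact (Finset.subset_insert_iff_of_notMem haB).mp hB
      · exact (Finset.subset_insert_iff_of_notMem haC).mp hC

theorem extension {G : Type*} [AddCommGroup G] [DecidableEq G] {k n0 : ℕ}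
    (hn : (2 * n0 + 1) ^ (4 * k) < 2 ^ n0) {D Z : Finset G} (hDZ : Disjoint D Z)
    (hD : Diss {0} D) (hZ : Diss {0} Z) (hZc : Z.card = 2 * k) (hDc : n0 ≤ D.card) :
    ∃ Z', Z' ⊆ D ∧ Z'.card = 2 * k ∧ Diss {0} (Z ∪ Z') := by
  obtain ⟨W, hWD, hW, hmax⟩ := exists_maxP (fun W => Diss {0} (Z ∪ W)) (by simpa using hZ) D
  by_cases hc : 2 * k ≤ W.card
  · obtain ⟨Z', hZ', hZc'⟩ := Finset.exists_subset_card_eq hc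
    exact ⟨Z', hZ'.trans hWD, hZc', hW.mono (Finset.union_subset_union_right hZ')⟩
  exfalso
  set U := Z ∪ W with hU
  have hUc : U.card ≤ 4 * k := by
    have := Finset.card_union_le Z W
    rw [← hU] at this
    omega
  have hsp : ∀ d ∈ D, ∃ c : G → ℤ, (∀ u, |c u| ≤ 1) ∧ d = ∑ u ∈ U, c u • u := by
    intro d hd
    obtain ⟨c, hc, h, hh, he⟩ := span_of (H := {0}) (by simp) (by simp) hW (a := d) (by
      intro hdU
      have := hmax d hd (fun h => hdU (Finset.mem_union_right _ h))
      rwa [Finset.union_insert] at this)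
    refine ⟨c, hc, ?_⟩
    rw [Set.mem_singleton_iff.mp hh, add_zero] at he
    exact he
  choose! c hc1 hc2 using hsp
  obtain ⟨D0, hD0, hD0c⟩ := Finset.exists_subset_card_eq hDc
  have hpig := Finset.exists_ne_map_eq_of_card_lt_of_maps_to
    (s := D0.powerset) (t := Fintype.piFinset (fun _ : U => Finset.Icc (-(n0 : ℤ)) n0))
    (f := fun B => fun u => ∑ d ∈ B, c d u)
    (by
      rw [Finset.card_powerset, hD0c, Fintype.card_piFinset]
      simp only [Int.card_Icc, Finset.prod_const, Finset.card_univ, Fintype.card_coe]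
      refine lt_of_le_of_lt ?_ hn
      rw [show ((n0 : ℤ) + 1 - -(n0 : ℤ)).toNat = 2 * n0 + 1 by omega]
      exact Nat.pow_le_pow_right (by omega) hUc)
    (by
      intro B hB
      have hB := Finset.mem_powerset.mp hB
      rw [Finset.mem_coe, Fintype.mem_piFinset]
      intro u
      rw [Finset.mem_Icc, ← abs_le]
      calc |∑ d ∈ B, c d u| ≤ ∑ d ∈ B, |c d u| := Finset.abs_sum_le_sum_abs _ _
        _ ≤ ∑ d ∈ B, 1 := Finset.sum_le_sum (fun d hd => hc1 d (hD0 (hB hd)) u)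
        _ ≤ n0 := by
          simp only [Finset.sum_const, nsmul_eq_mul, mul_one]
          rw [← hD0c]
          exact_mod_cast Finset.card_le_card hB)
  obtain ⟨B, hB, C, hC, hne, he⟩ := hpig
  have hB := Finset.mem_powerset.mp hB
  have hC := Finset.mem_powerset.mp hC
  have key : ∀ B ⊆ D0, ∑ d ∈ B, d = ∑ u ∈ U, (∑ d ∈ B, c d u) • u := by
    intro B hB
    simp only [Finset.sum_smul]
    rw [Finset.sum_comm]
    exact Finset.sum_congr rfl (fun d hd => hc2 d (hD0 (hB hd)))
  apply hne
  refine hD B (hB.trans hD0) C (hC.trans hD0) ?_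
  rw [key B hB, key C hC, Set.mem_singleton_iff, sub_eq_zero]
  refine Finset.sum_congr rfl (fun u hu => ?_)
  have := congrFun he ⟨u, hu⟩
  simp only at this
  rw [this]

theorem decomposition {G : Type*} [AddCommGroup G] [DecidableEq G] {R : ℕ} (hR : 1 ≤ R) :
    ∀ (s : ℕ) (A : Finset G), A.card = s → ∃ (n : ℕ) (blk : G → ℕ), (∀ a ∈ A, blk a ≤ n) ∧
      (∀ j, 1 ≤ j → j ≤ n → Diss {0} (A.filter (fun a => blk a = j)) ∧
        (A.filter (fun a => blk a = j)).card = R) ∧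
      (∀ T, T ⊆ A.filter (fun a => blk a = 0) → Diss {0} T → T.card ≠ R) := by
  intro s
  induction s using Nat.strong_induction_on with
  | _ s ih =>
  intro A hA
  by_cases h : ∃ T, T ⊆ A ∧ Diss {0} T ∧ T.card = R
  · obtain ⟨T, hTA, hT, hTc⟩ := h
    have hcard := Finset.card_sdiff_of_subset hTA
    have hle := Finset.card_le_card hTA
    obtain ⟨n, blk, h1, h2, h3⟩ := ih (A \ T).card (by omega) (A \ T) rfl
    refine ⟨n + 1, fun a => if a ∈ T then n + 1 else blk a, ?_, ?_, ?_⟩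
    · intro a ha
      dsimp only
      split_ifs with haT
      · exact le_rfl
      · have := h1 a (by simp [ha, haT])
        omega
    · intro j hj hjn
      rcases Nat.lt_or_ge n j with hj' | hj'
      · have : j = n + 1 := by omega
        subst this
        have e : A.filter (fun a => (if a ∈ T then n + 1 else blk a) = n + 1) = T := by
          ext a
          simp only [Finset.mem_filter]
          constructor
          · rintro ⟨ha, h⟩
            by_contra haT
            rw [if_neg haT] at h
            have := h1 a (by simp [ha, haT])
            omega
          · intro ha
            exact ⟨hTA ha, by rw [if_pos ha]⟩
        rw [e]
        exact ⟨hT, hTc⟩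
      · have e : A.filter (fun a => (if a ∈ T then n + 1 else blk a) = j) =
            (A \ T).filter (fun a => blk a = j) := by
          ext a
          simp only [Finset.mem_filter, Finset.mem_sdiff]
          by_cases haT : a ∈ T
          · simp [haT]; omega
          · simp [haT]
        rw [e]
        exact h2 j hj hj'
    · have e : A.filter (fun a => (if a ∈ T then n + 1 else blk a) = 0) =
            (A \ T).filter (fun a => blk a = 0) := by
          ext a
          simp only [Finset.mem_filter, Finset.mem_sdiff]
          by_cases haT : a ∈ T
          · simp [haT]
          · simp [haT]
      rw [e]
      exact h3
  · push Not at h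
    refine ⟨0, fun _ => 0, by simp, ?_, ?_⟩
    · intro j h1 h2; omega
    · intro T hT hd
      exact h T (hT.trans (Finset.filter_subset _ _)) hd


theorem dirichlet {p : ℕ} [Fact p.Prime] (T : Finset (ZMod p)) (N M : ℕ) (hN : 0 < N)
    (hM : N ^ T.card ≤ M) : ∃ μ : ℕ, 1 ≤ μ ∧ μ ≤ M ∧
      ∀ t ∈ T, ∃ z : ℤ, (z : ZMod p) = (μ : ZMod p) * t ∧ (N : ℤ) * |z| ≤ p := by
  have hp : 0 < p := (Fact.out : p.Prime).pos
  have hpig := Finset.exists_ne_map_eq_of_card_lt_of_maps_to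
    (s := Finset.range (M + 1)) (t := Fintype.piFinset (fun _ : T => Finset.range N))
    (f := fun i => fun t => N * ((i : ZMod p) * (t : ZMod p)).val / p)
    (by
      rw [Fintype.card_piFinset]
      simp only [Finset.card_range, Finset.prod_const, Finset.card_univ, Fintype.card_coe]
      omega)
    (by
      intro i _
      rw [Finset.mem_coe, Fintype.mem_piFinset]
      intro t
      rw [Finset.mem_range, Nat.div_lt_iff_lt_mul hp]
      exact Nat.mul_lt_mul_of_pos_left (ZMod.val_lt _) hN)
  have key : ∀ i j : ℕ, i < j → j ≤ M →
      (∀ t ∈ T, N * ((i : ZMod p) * t).val / p = N * ((j : ZMod p) * t).val / p) →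
      ∃ μ : ℕ, 1 ≤ μ ∧ μ ≤ M ∧
      ∀ t ∈ T, ∃ z : ℤ, (z : ZMod p) = (μ : ZMod p) * t ∧ (N : ℤ) * |z| ≤ p := by
    intro i j hij hj h
    refine ⟨j - i, by omega, by omega, fun t ht => ?_⟩
    refine ⟨(((j : ZMod p) * t).val : ℤ) - (((i : ZMod p) * t).val : ℤ), ?_, ?_⟩
    · push_cast [Nat.cast_sub hij.le]
      simp only [ZMod.natCast_zmod_val]
      ring
    · have h1 := h t ht
      set a := ((i : ZMod p) * t).val
      set b := ((j : ZMod p) * t).val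
      have ha := Nat.div_add_mod (N * a) p
      have hb := Nat.div_add_mod (N * b) p
      have ha' := Nat.mod_lt (N * a) hp
      have hb' := Nat.mod_lt (N * b) hp
      rw [h1] at ha
      have : (N : ℤ) * |(b : ℤ) - a| = |(N * b : ℤ) - N * a| := by
        rw [← mul_sub, abs_mul]; simp
      rw [this, abs_le]
      have hc := Nat.zero_le (N * a % p)
      have hd := Nat.zero_le (N * b % p)
      zify at ha hb ha' hb' hc hd
      constructor <;> linarith
  obtain ⟨i, hi, j, hj, hne, he⟩ := hpig
  rw [Finset.mem_range] at hi hj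
  have he' : ∀ t ∈ T, N * ((i : ZMod p) * t).val / p = N * ((j : ZMod p) * t).val / p :=
    fun t ht => congrFun he ⟨t, ht⟩
  rcases Nat.lt_or_gt_of_ne hne with h | h
  · exact key i j h (by omega) he'
  · exact key j i h (by omega) (fun t ht => (he' t ht).symm)

/-- Case when everything becomes small after dilation. -/
theorem small_case {p : ℕ} [Fact p.Prime] (A : Finset (ZMod p)) (hA0 : (0 : ZMod p) ∉ A)
    (κ : ZMod p) (hκ : κ ≠ 0) (m : ℕ) (hm : A.card ≤ m)
    (h : ∀ a ∈ A, ∃ z : ℤ, (z : ZMod p) = κ * a ∧ (m : ℤ) * |z| < p) : Sequenceable A := by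
  have hp : 0 < p := (Fact.out : p.Prime).pos
  choose! z hz1 hz2 using h
  have hinj : Set.InjOn z A := by
    intro a ha b hb hab
    have : κ * a = κ * b := by rw [← hz1 a ha, ← hz1 b hb, hab]
    exact mul_left_cancel₀ hκ this
  set S := A.image z with hS
  have hS0 : (0 : ℤ) ∉ S := by
    intro h0
    obtain ⟨a, ha, ha0⟩ := Finset.mem_image.mp h0
    have := hz1 a ha
    rw [ha0, Int.cast_zero] at this
    rcases mul_eq_zero.mp this.symm with h | h
    · exact hκ h
    · exact hA0 (h ▸ ha)
  obtain ⟨l, h1, h2, h3⟩ := int_seq S hS0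
  have hlm : ∀ x, x ∈ l ↔ x ∈ S := fun x => by rw [← h2]; simp
  have hback : ∀ a ∈ A, κ⁻¹ * ((z a : ℤ) : ZMod p) = a := by
    intro a ha
    rw [hz1 a ha, inv_mul_cancel_left₀ hκ]
  have hlen : l.length ≤ m := by
    rw [← List.toFinset_card_of_nodup h1, h2]
    exact Finset.card_image_le.trans hm
  refine ⟨l.map (fun x : ℤ => κ⁻¹ * (x : ZMod p)), ?_, ?_, SegOK.isSeq ?_⟩
  · rw [List.nodup_map_iff_inj_on h1]
    intro x hx y hy hxy
    obtain ⟨a, ha, rfl⟩ := Finset.mem_image.mp ((hlm x).mp hx)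
    obtain ⟨b, hb, rfl⟩ := Finset.mem_image.mp ((hlm y).mp hy)
    rw [hback a ha, hback b hb] at hxy
    rw [hxy]
  · ext x
    simp only [List.mem_toFinset, List.mem_map, hlm]
    constructor
    · rintro ⟨y, hy, rfl⟩
      obtain ⟨a, ha, rfl⟩ := Finset.mem_image.mp hy
      rw [hback a ha]; exact ha
    · intro hx
      exact ⟨z x, Finset.mem_image_of_mem _ hx, hback x hx⟩
  · intro l1 l2 l3 hl hl2 h13 h0
    obtain ⟨u, w, rfl, hu, rfl⟩ := List.map_eq_append_iff.mp hl
    obtain ⟨x, y, rfl, rfl, rfl⟩ := List.map_eq_append_iff.mp hu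
    have hsum : ∀ y : List ℤ, (y.map (fun x : ℤ => κ⁻¹ * (x : ZMod p))).sum = κ⁻¹ * ((y.sum : ℤ) : ZMod p) := by
      intro y
      induction y with
      | nil => simp
      | cons a t ih => simp only [List.map_cons, List.sum_cons, ih]; push_cast; ring
    have hne : y.sum ≠ 0 := h3 x y w rfl (by simpa using hl2) (by simpa using h13)
    rw [hsum] at h0
    have h0' : ((y.sum : ℤ) : ZMod p) = 0 := by
      rcases mul_eq_zero.mp h0 with h | h
      · exact absurd h (inv_ne_zero hκ)
      · exact h
    rw [ZMod.intCast_zmod_eq_zero_iff_dvd] at h0'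
    have hbound : ∀ y : List ℤ, (∀ x ∈ y, (m : ℤ) * |x| < p) → y ≠ [] → (m : ℤ) * |y.sum| < y.length * p := by
      intro y
      induction y with
      | nil => intro _ h; exact absurd rfl h
      | cons a t ih =>
        intro hh _
        have ha := hh a (by simp)
        have habs := abs_add_le a t.sum
        have hm0 : (0 : ℤ) ≤ m := by positivity
        by_cases ht : t = []
        · subst ht
          simpa using ha
        · have := ih (fun x hx => hh x (by simp [hx])) ht
          simp only [List.sum_cons, List.length_cons]
          push_cast
          nlinarith
    have hb := hbound y (fun x hx => by
      obtain ⟨a, ha, rfl⟩ := Finset.mem_image.mp ((hlm x).mp (by simp [hx]))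
      exact hz2 a ha) (by simpa using hl2)
    have hyl : (y.length : ℤ) ≤ m := by
      have : y.length ≤ m := by simp at hlen; omega
      exact_mod_cast this
    have hple := Int.le_of_dvd (abs_pos.mpr hne) ((dvd_abs _ _).mpr h0')
    have hm0 : (0 : ℤ) ≤ m := by positivity
    have hp' : (0 : ℤ) < p := by exact_mod_cast hp
    nlinarith


/-- Slots. -/
abbrev Sl (s k : ℕ) (O : Type) := (Bool × Fin (2 * s) × Fin k) ⊕ O

/-- swap -/
def sw {s k : ℕ} {O : Type} (e : Fin (2 * s) × Fin k → Bool) : Sl s k O → Sl s k O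
  | Sum.inl (b, j) => Sum.inl (xor b (e j), j)
  | Sum.inr o => Sum.inr o

/-- rank -/
def rk {s k : ℕ} {O : Type} (ork : O → ℕ) : Sl s k O → ℕ
  | Sum.inl (false, z, _) => 2 * z.val
  | Sum.inl (true, z, _) => 4 * s + 3 + z.val
  | Sum.inr o => ork o

/-- zone -/
def zn {s k : ℕ} {O : Type} : Sl s k O → Option ℕ
  | Sum.inl (_, z, _) => some z.val
  | Sum.inr _ => none

/-- block -/
def bl {s k : ℕ} {O : Type} (ork : O → ℕ) : Sl s k O → ℕ
  | Sum.inl (_, z, _) => z.val / 2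
  | Sum.inr o => ork o / 4

theorem sw_sw {s k : ℕ} {O : Type} (e : Fin (2 * s) × Fin k → Bool) (a : Sl s k O) :
    sw e (sw e a) = a := by
  rcases a with ⟨b, j⟩ | o <;> simp [sw]

theorem sw_inj {s k : ℕ} {O : Type} (e : Fin (2 * s) × Fin k → Bool) :
    Function.Injective (sw e : Sl s k O → Sl s k O) := by
  intro a b h
  rw [← sw_sw e a, h, sw_sw]

theorem zn_sw {s k : ℕ} {O : Type} (e : Fin (2 * s) × Fin k → Bool) (a : Sl s k O) :
    zn (sw e a) = zn a := by
  rcases a with ⟨b, j⟩ | o <;> simp [sw, zn]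

theorem bl_sw {s k : ℕ} {O : Type} (ork : O → ℕ) (e : Fin (2 * s) × Fin k → Bool)
    (a : Sl s k O) : bl ork (sw e a) = bl ork a := by
  rcases a with ⟨b, j⟩ | o <;> simp [sw, bl]

/-- Hypotheses of the core lemma. -/
structure CoreHyp {G : Type*} [AddCommGroup G] (s k : ℕ) {O : Type} [Fintype O] [DecidableEq O]
    (v : Sl s k O → G) (ork : O → ℕ) : Prop where
  hs : 2 ≤ s
  hv : Function.Injective v
  hork : ∀ o, (∃ j, j < s ∧ ork o = 4 * j + 1) ∨ ork o = 4 * s ∨ ork o = 4 * s + 1 ∨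
    ork o = 4 * s + 2
  hg : ∃ o, ork o = 4 * s + 1
  hk : (Fintype.card (Sl s k O) + 1) ^ 2 < 2 ^ k
  H1 : ∀ j, j < s → ∀ B C : Finset (Sl s k O), (∀ a ∈ B, bl ork a = j) → (∀ a ∈ C, bl ork a = j) →
    ∑ a ∈ B, v a = ∑ a ∈ C, v a → B = C
  H2 : ∀ i, i + 1 < s → ∀ B : Finset (Sl s k O), B.Nonempty →
    (∀ a ∈ B, zn a = some (2 * i + 1) ∨ zn a = some (2 * i + 2)) → ∑ a ∈ B, v a ≠ 0
  H3 : ∀ B T : Finset (Sl s k O), B.Nonempty →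
    (∀ a ∈ B, zn a = some (2 * s - 1) ∨ zn a = some 0 ∨ ∃ o, a = Sum.inr o ∧ ork o = 4 * s + 1) →
    (∀ a ∈ T, ∃ o, a = Sum.inr o ∧ (ork o = 4 * s ∨ ork o = 4 * s + 2)) →
    ∑ a ∈ B, v a + ∑ a ∈ T, v a ≠ 0
  H4 : ∀ T : Finset (Sl s k O), T.Nonempty →
    ((∀ a ∈ T, ∃ o, a = Sum.inr o ∧ ork o = 4 * s) ∨
      (∀ a ∈ T, ∃ o, a = Sum.inr o ∧ ork o = 4 * s + 2)) → ∑ a ∈ T, v a ≠ 0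
  H5 : ∀ B : Finset (Sl s k O), B.Nonempty →
    (∀ a ∈ B, zn a = some (2 * s - 1) ∨ zn a = some 0) → ∑ a ∈ B, v a ≠ ∑ a, v a

/-- good -/
def GoodS {s k : ℕ} {O : Type} (S : Finset (Sl s k O)) : Prop :=
  ∃ (z : Fin (2 * s)) (b : Bool), (∀ i, Sum.inl (b, z, i) ∈ S) ∧ (∀ i, Sum.inl (!b, z, i) ∉ S)

section
variable {G : Type*} [AddCommGroup G] {s k : ℕ} {O : Type} [Fintype O] [DecidableEq O]
    {v : Sl s k O → G} {ork : O → ℕ}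

theorem good_inj (h : CoreHyp s k v ork) {S : Finset (Sl s k O)} {z : Fin (2 * s)} {b : Bool}
    (h1 : ∀ i, Sum.inl (b, z, i) ∈ S) (h2 : ∀ i, Sum.inl (!b, z, i) ∉ S)
    {e e' : Fin (2 * s) × Fin k → Bool} (he : ∑ a ∈ S, v (sw e a) = 0)
    (he' : ∑ a ∈ S, v (sw e' a) = 0) (hag : ∀ z' i, z' ≠ z → e (z', i) = e' (z', i)) : e = e' := by
  classical
  set Zs : Finset (Sl s k O) := Finset.univ.image (fun i : Fin k => Sum.inl (b, z, i)) with hZs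
  have hsub : Zs ⊆ S := by
    intro a ha
    obtain ⟨i, _, rfl⟩ := Finset.mem_image.mp ha
    exact h1 i
  have hrest : ∑ a ∈ S \ Zs, v (sw e a) = ∑ a ∈ S \ Zs, v (sw e' a) := by
    refine Finset.sum_congr rfl (fun a ha => ?_)
    rw [Finset.mem_sdiff] at ha
    rcases a with ⟨b', z', i⟩ | o
    · have hz : z' ≠ z := by
        rintro rfl
        by_cases hb : b' = b
        · subst hb
          exact ha.2 (Finset.mem_image.mpr ⟨i, Finset.mem_univ _, rfl⟩)
        · have : b' = !b := by cases b <;> cases b' <;> simp_all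
          subst this
          exact h2 i ha.1
      simp only [sw, hag z' i hz]
    · rfl
  rw [← Finset.sum_sdiff hsub, hrest] at he
  rw [← Finset.sum_sdiff hsub] at he'
  have hz : ∑ a ∈ Zs, v (sw e a) = ∑ a ∈ Zs, v (sw e' a) := by
    exact add_left_cancel (he.trans he'.symm)
  rw [← Finset.sum_image (f := v) (fun a _ c _ hh => sw_inj e hh),
    ← Finset.sum_image (f := v) (fun a _ c _ hh => sw_inj e' hh)] at hz
  have hbl : ∀ e : Fin (2 * s) × Fin k → Bool, ∀ a ∈ Zs.image (sw e), bl ork a = z.val / 2 := by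
    intro e a ha
    obtain ⟨c, hc, rfl⟩ := Finset.mem_image.mp ha
    obtain ⟨i, _, rfl⟩ := Finset.mem_image.mp hc
    simp [sw, bl]
  have hBC := h.H1 (z.val / 2) (by omega) _ _ (hbl e) (hbl e') hz
  funext ⟨z', i⟩
  by_cases hzz : z' = z
  · subst hzz
    have hm : sw e (Sum.inl (b, z', i)) ∈ Zs.image (sw e') := by
      rw [← hBC]
      exact Finset.mem_image_of_mem _ (Finset.mem_image_of_mem _ (Finset.mem_univ _))
    obtain ⟨c, hc, hce⟩ := Finset.mem_image.mp hm
    obtain ⟨i', _, rfl⟩ := Finset.mem_image.mp hc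
    simp only [sw, Sum.inl.injEq, Prod.mk.injEq, true_and] at hce
    obtain ⟨h3, h4⟩ := hce
    subst h4
    revert h3
    cases b <;> cases e (z', i') <;> cases e' (z', i') <;> simp
  · exact hag z' i hzz

theorem good_count [DecidableEq G] (h : CoreHyp s k v ork) {S : Finset (Sl s k O)} (hS : GoodS S) :
    (Finset.univ.filter (fun e : Fin (2 * s) × Fin k → Bool => ∑ a ∈ S, v (sw e a) = 0)).card * 2 ^ k
      ≤ 2 ^ (2 * s * k) := by
  classical
  obtain ⟨z, b, h1, h2⟩ := hS
  set E := Finset.univ.filter (fun e : Fin (2 * s) × Fin k → Bool => ∑ a ∈ S, v (sw e a) = 0)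
  have hc : (E ×ˢ (Finset.univ : Finset (Fin k → Bool))).card ≤
      (Finset.univ : Finset (Fin (2 * s) × Fin k → Bool)).card := by
    apply Finset.card_le_card_of_injOn
      (fun q => fun zi => if zi.1 = z then q.2 zi.2 else q.1 zi)
    · intro _ _; simp
    · rintro ⟨e, d⟩ hq ⟨e', d'⟩ hq' hh
      simp only [Finset.coe_product, Set.mem_prod, Finset.mem_coe, E, Finset.mem_filter] at hq hq'
      have hd : d = d' := by
        funext i
        have := congrFun hh (z, i)
        simpa using this
      have hee : e = e' := by
        refine good_inj h h1 h2 hq.1.2 hq'.1.2 ?_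
        intro z' i hz
        have := congrFun hh (z', i)
        simpa [hz] using this
      rw [hd, hee]
  rw [Finset.card_product] at hc
  simpa using hc

theorem bad_sum (h : CoreHyp s k v ork) {S : Finset (Sl s k O)} (hne : S.Nonempty)
    (huniv : ∃ a, a ∉ S) (hconv : ∀ a ∈ S, ∀ b ∈ S, ∀ c, rk ork a < rk ork c → rk ork c < rk ork b → c ∈ S)
    (hgood : ¬ GoodS S) (e : Fin (2 * s) × Fin k → Bool) : ∑ a ∈ S, v (sw e a) ≠ 0 := by
  classical
  have hsum : ∀ S : Finset (Sl s k O), ∑ a ∈ S, v (sw e a) = ∑ a ∈ S.image (sw e), v a := fun S =>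
    (Finset.sum_image (f := v) (fun a _ c _ hh => sw_inj e hh)).symm
  have hs := h.hs
  have hk0 : 0 < k := by
    rcases Nat.eq_zero_or_pos k with h0 | h0
    · have := h.hk
      rw [h0, pow_zero] at this
      have h1 : 1 ≤ (Fintype.card (Sl s 0 O) + 1) ^ 2 := Nat.one_le_pow _ _ (by omega)
      subst h0
      omega
    · exact h0
  obtain ⟨a0, ha0, hlo⟩ := S.exists_min_image (rk ork) hne
  obtain ⟨b0, hb0, hhi⟩ := S.exists_max_image (rk ork) hne
  set lo := rk ork a0 with hlodef
  set hi := rk ork b0 with hhidef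
  have hin : ∀ c, lo < rk ork c → rk ork c < hi → c ∈ S := hconv a0 ha0 b0 hb0
  have hlohi : lo ≤ hi := hlo b0 hb0
  -- good criteria
  have gX : ∀ z, z < 2 * s → lo < 2 * z → 2 * z < hi → (hi < 4 * s + 3 + z) → False := by
    intro z hz h1 h2 h3
    refine hgood ⟨⟨z, hz⟩, false, fun i => hin _ h1 h2, fun i hi' => ?_⟩
    have := hhi _ hi'
    simp only [rk, Bool.not_false] at this
    omega
  have gY : ∀ z, z < 2 * s → lo < 4 * s + 3 + z → 4 * s + 3 + z < hi → (2 * z < lo) → False := by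
    intro z hz h1 h2 h3
    refine hgood ⟨⟨z, hz⟩, true, fun i => hin _ h1 h2, fun i hi' => ?_⟩
    have := hlo _ hi'
    simp only [rk, Bool.not_true] at this
    omega
  -- classification of slots
  have cls : ∀ a : Sl s k O, 
      (∃ z, z < 2 * s ∧ zn a = some z ∧ bl ork a = z / 2 ∧ (rk ork a = 2 * z ∨ rk ork a = 4 * s + 3 + z)) ∨
      (∃ j, j < s ∧ bl ork a = j ∧ rk ork a = 4 * j + 1) ∨
      (∃ o, a = Sum.inr o ∧ rk ork a = ork o ∧ (ork o = 4 * s ∨ ork o = 4 * s + 1 ∨ ork o = 4 * s + 2)) := by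
    intro a
    rcases a with ⟨b, z, i⟩ | o
    · left
      refine ⟨z.val, z.2, rfl, rfl, ?_⟩
      cases b <;> simp [rk]
    · right
      rcases h.hork o with ⟨j, hj, hj'⟩ | h'
      · left
        exact ⟨j, hj, by simp only [bl]; omega, by simp only [rk]; omega⟩
      · right
        exact ⟨o, rfl, rfl, h'⟩
  have mim : ∀ {P : Sl s k O → Prop} {S : Finset (Sl s k O)}, (∀ a ∈ S, P (sw e a)) →
      ∀ a ∈ S.image (sw e), P a := by
    intro P S hP a ha
    obtain ⟨c, hc, rfl⟩ := Finset.mem_image.mp ha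
    exact hP c hc
  have block : ∀ j, j < s → (∀ a ∈ S, bl ork a = j) → ∑ a ∈ S, v (sw e a) ≠ 0 := by
    intro j hj hb h0
    rw [hsum] at h0
    have := h.H1 j hj (S.image (sw e)) ∅ (mim (fun a ha => by rw [bl_sw]; exact hb a ha)) (by simp)
      (by simpa using h0)
    rw [Finset.image_eq_empty] at this
    exact hne.ne_empty this
  have strad : ∀ i, i + 1 < s → (∀ a ∈ S, zn a = some (2 * i + 1) ∨ zn a = some (2 * i + 2)) →
      ∑ a ∈ S, v (sw e a) ≠ 0 := by
    intro i hi hb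
    rw [hsum]
    exact h.H2 i hi _ (hne.image _) (mim (fun a ha => by rw [zn_sw]; exact hb a ha))
  rcases Nat.lt_or_ge hi (4 * s) with hX | hX
  · -- X part
    rcases Nat.lt_or_ge (lo / 4) (hi / 4) with hj | hj
    · have e1 : ¬ (lo < 4 * (lo / 4) + 2) := by
        intro h'
        exact gX (2 * (lo / 4) + 1) (by omega) (by omega) (by omega) (by omega)
      have e2 : ¬ (4 * (hi / 4) < hi) := by
        intro h'
        exact gX (2 * (hi / 4)) (by omega) (by omega) (by omega) (by omega)
      have e3 : hi / 4 = lo / 4 + 1 := by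
        by_contra h'
        exact gX (2 * (lo / 4) + 2) (by omega) (by omega) (by omega) (by omega)
      refine strad (lo / 4) (by omega) (fun a ha => ?_)
      have := hlo a ha
      have := hhi a ha
      rcases cls a with ⟨z, hz, h1, h2, h3⟩ | ⟨j, hj, h1, h2⟩ | ⟨o, h1, h2, h3⟩
      · rw [h1]
        simp only [Option.some.injEq]
        omega
      · omega
      · omega
    · refine block (lo / 4) (by omega) (fun a ha => ?_)
      have := hlo a ha
      have := hhi a ha
      rcases cls a with ⟨z, hz, h1, h2, h3⟩ | ⟨j, hj, h1, h2⟩ | ⟨o, h1, h2, h3⟩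
      · omega
      · omega
      · omega
  rcases Nat.lt_or_ge (4 * s + 2) lo with hY | hY
  · have hhile : hi ≤ 6 * s + 2 := by
      rcases cls b0 with ⟨z, hz, h1, h2, h3⟩ | ⟨j, hj, h1, h2⟩ | ⟨o, h1, h2, h3⟩ <;> omega
    rcases Nat.lt_or_ge ((lo - (4 * s + 3)) / 2) ((hi - (4 * s + 3)) / 2) with hj | hj
    · have e1 : hi = lo + 1 := by
        by_contra h'
        exact gY (lo - (4 * s + 3) + 1) (by omega) (by omega) (by omega) (by omega)
      refine strad ((lo - (4 * s + 3)) / 2) (by omega) (fun a ha => ?_)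
      have := hlo a ha
      have := hhi a ha
      rcases cls a with ⟨z, hz, h1, h2, h3⟩ | ⟨j, hj, h1, h2⟩ | ⟨o, h1, h2, h3⟩
      · rw [h1]
        simp only [Option.some.injEq]
        omega
      · omega
      · omega
    · refine block ((lo - (4 * s + 3)) / 2) (by omega) (fun a ha => ?_)
      have := hlo a ha
      have := hhi a ha
      rcases cls a with ⟨z, hz, h1, h2, h3⟩ | ⟨j, hj, h1, h2⟩ | ⟨o, h1, h2, h3⟩ <;> omega
  rcases Nat.lt_or_ge lo (4 * s - 2) with hxs | hxs
  · rcases Nat.lt_or_ge (4 * s + 3) hi with hys | hys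
    · -- neither short
      have e1 : hi = 6 * s + 2 := by
        have : hi ≤ 6 * s + 2 := by
          rcases cls b0 with ⟨z, hz, h1, h2, h3⟩ | ⟨j, hj, h1, h2⟩ | ⟨o, h1, h2, h3⟩ <;> omega
        by_contra h'
        exact gX (2 * s - 1) (by omega) (by omega) (by omega) (by omega)
      have e2 : lo = 0 := by
        by_contra h'
        exact gY 0 (by omega) (by omega) (by omega) (by omega)
      have hcompl : ∀ a ∈ Sᶜ, zn a = some (2 * s - 1) ∨ zn a = some 0 := by
        intro a ha
        rw [Finset.mem_compl] at ha
        have : ¬ (lo < rk ork a ∧ rk ork a < hi) := fun h' => ha (hin a h'.1 h'.2)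
        rcases cls a with ⟨z, hz, h1, h2, h3⟩ | ⟨j, hj, h1, h2⟩ | ⟨o, h1, h2, h3⟩
        · rw [h1]
          simp only [Option.some.injEq]
          omega
        · omega
        · omega
      obtain ⟨a1, ha1⟩ := huniv
      have h5 := h.H5 (Sᶜ.image (sw e)) (Finset.Nonempty.image ⟨a1, by simpa using ha1⟩ _)
        (mim (fun a ha => by rw [zn_sw]; exact hcompl a ha))
      intro h0
      apply h5
      rw [← hsum]
      have h6 : ∑ a, v (sw e a) = ∑ a, v a := by
        rw [hsum, Finset.image_univ_of_surjective (fun a => ⟨sw e a, sw_sw e a⟩)]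
      rw [← h6, ← Finset.sum_add_sum_compl S, h0, zero_add]
    · exfalso
      exact gX (2 * s - 1) (by omega) (by omega) (by omega) (by omega)
  · rcases Nat.lt_or_ge (4 * s + 3) hi with hys | hys
    · exfalso
      exact gY 0 (by omega) (by omega) (by omega) (by omega)
    · -- both short
      have hcl : ∀ a ∈ S, (zn a = some (2 * s - 1) ∨ zn a = some 0 ∨
          ∃ o, a = Sum.inr o ∧ ork o = 4 * s + 1) ∨
          (∃ o, a = Sum.inr o ∧ (ork o = 4 * s ∨ ork o = 4 * s + 2)) := by
        intro a ha
        have := hlo a ha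
        have := hhi a ha
        rcases cls a with ⟨z, hz, h1, h2, h3⟩ | ⟨j, hj, h1, h2⟩ | ⟨o, h1, h2, h3⟩
        · left
          rw [h1]
          simp only [Option.some.injEq]
          rcases h3 with h3 | h3
          · left; omega
          · right; left; omega
        · omega
        · rcases h3 with h3 | h3 | h3
          · exact Or.inr ⟨o, h1, Or.inl h3⟩
          · exact Or.inl (Or.inr (Or.inr ⟨o, h1, h3⟩))
          · exact Or.inr ⟨o, h1, Or.inr h3⟩
      set T := S.filter (fun a => ∃ o, a = Sum.inr o ∧ (ork o = 4 * s ∨ ork o = 4 * s + 2)) with hT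
      set B := S.filter (fun a => ¬ ∃ o, a = Sum.inr o ∧ (ork o = 4 * s ∨ ork o = 4 * s + 2)) with hB
      have hTm : ∀ a ∈ T, ∃ o, sw e a = Sum.inr o ∧ (ork o = 4 * s ∨ ork o = 4 * s + 2) := by
        intro a ha
        obtain ⟨o, rfl, ho⟩ := (Finset.mem_filter.mp ha).2
        exact ⟨o, rfl, ho⟩
      have hBm : ∀ a ∈ B, zn (sw e a) = some (2 * s - 1) ∨ zn (sw e a) = some 0 ∨
          ∃ o, sw e a = Sum.inr o ∧ ork o = 4 * s + 1 := by
        intro a ha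
        have ha := Finset.mem_filter.mp ha
        rcases hcl a ha.1 with h' | h'
        · rw [zn_sw]
          rcases h' with h' | h' | ⟨o, rfl, ho⟩
          · exact Or.inl h'
          · exact Or.inr (Or.inl h')
          · exact Or.inr (Or.inr ⟨o, rfl, ho⟩)
        · exact absurd h' ha.2
      have hsplit : ∑ a ∈ S, v (sw e a) = ∑ a ∈ B, v (sw e a) + ∑ a ∈ T, v (sw e a) := by
        rw [add_comm, hT, hB, Finset.sum_filter_add_sum_filter_not]
      rcases B.eq_empty_or_nonempty with hB0 | hB0
      · have hTS : T = S := by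
          rw [hT, Finset.filter_eq_self]
          intro a ha
          by_contra h'
          have : a ∈ B := Finset.mem_filter.mpr ⟨ha, h'⟩
          rw [hB0] at this
          simp at this
        rw [hTS] at hTm
        rw [hsum]
        refine h.H4 _ (hne.image _) ?_
        by_cases hlo4 : lo = 4 * s ∧ hi = 4 * s + 2
        · exfalso
          obtain ⟨o, ho⟩ := h.hg
          have : (Sum.inr o : Sl s k O) ∈ S := hin _ (by simp only [rk]; omega) (by simp only [rk]; omega)
          obtain ⟨o', ho', h''⟩ := hTm _ this
          simp only [sw, Sum.inr.injEq] at ho'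
          subst ho'
          omega
        · have hrr : ∀ a ∈ S, ∃ o, sw e a = Sum.inr o ∧ (ork o = 4 * s ∨ ork o = 4 * s + 2) ∧ ork o = rk ork a := by
            intro a ha
            obtain ⟨o, h1, h2⟩ := hTm a ha
            refine ⟨o, h1, h2, ?_⟩
            have : a = Sum.inr o := by rw [← sw_sw e a, h1]; rfl
            rw [this]; rfl
          obtain ⟨o1, _, h12, h13⟩ := hrr a0 ha0
          obtain ⟨o2, _, h22, h23⟩ := hrr b0 hb0
          by_cases hl : lo = 4 * s
          · left
            refine mim (fun a ha => ?_)
            obtain ⟨o, h1, h2, h3⟩ := hrr a ha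
            have := hhi a ha
            exact ⟨o, h1, by omega⟩
          · right
            refine mim (fun a ha => ?_)
            obtain ⟨o, h1, h2, h3⟩ := hrr a ha
            have := hlo a ha
            exact ⟨o, h1, by omega⟩
      · rw [hsplit, hsum, hsum]
        exact h.H3 _ _ (hB0.image _) (mim hBm) (mim hTm)

theorem core [DecidableEq G] (h : CoreHyp s k v ork) :
    ∃ l : List G, l.Nodup ∧ l.toFinset = Finset.univ.image v ∧ SegOK l := by
  classical
  set r : Sl s k O → Sl s k O → Prop := fun a b => rk ork a ≤ rk ork b with hr
  have : Std.Total r := ⟨fun a b => le_total _ _⟩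
  have : IsTrans (Sl s k O) r := ⟨fun a b c h1 h2 => le_trans h1 h2⟩
  set L := (Finset.univ : Finset (Sl s k O)).toList.insertionSort r with hL
  have hperm : L.Perm (Finset.univ : Finset (Sl s k O)).toList := List.perm_insertionSort _ _
  have hsort : L.Pairwise r := List.pairwise_insertionSort _ _
  have hnd : L.Nodup := hperm.nodup_iff.mpr (Finset.nodup_toList _)
  have hmem : ∀ a, a ∈ L := fun a => hperm.mem_iff.mpr (by simp)
  have hlen : L.length = Fintype.card (Sl s k O) := by
    rw [hperm.length_eq]; simp
  set n := L.length with hn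
  set seg : ℕ × ℕ → Finset (Sl s k O) := fun ij => ((L.take ij.2).drop ij.1).toFinset with hseg
  obtain ⟨e, he⟩ : ∃ e : Fin (2 * s) × Fin k → Bool, ∀ ij ∈ Finset.range (n + 1) ×ˢ Finset.range (n + 1),
      GoodS (seg ij) → ∑ a ∈ seg ij, v (sw e a) ≠ 0 := by
    by_contra hcon
    push Not at hcon
    set Bd : ℕ × ℕ → Finset (Fin (2 * s) × Fin k → Bool) := fun ij =>
      Finset.univ.filter (fun e => GoodS (seg ij) ∧ ∑ a ∈ seg ij, v (sw e a) = 0) with hBd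
    have hcov : (Finset.univ : Finset (Fin (2 * s) × Fin k → Bool)) ⊆
        (Finset.range (n + 1) ×ˢ Finset.range (n + 1)).biUnion Bd := by
      intro e _
      obtain ⟨ij, h1, h2, h3⟩ := hcon e
      exact Finset.mem_biUnion.mpr ⟨ij, h1, Finset.mem_filter.mpr ⟨Finset.mem_univ _, h2, h3⟩⟩
    have hc1 := (Finset.card_le_card hcov).trans Finset.card_biUnion_le
    have hc2 : ∀ ij, (Bd ij).card * 2 ^ k ≤ 2 ^ (2 * s * k) := by
      intro ij
      by_cases hg : GoodS (seg ij)
      · have := good_count h hg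
        simpa [hBd, hg] using this
      · simp [hBd, hg]
    have hc3 : (∑ ij ∈ Finset.range (n + 1) ×ˢ Finset.range (n + 1), (Bd ij).card) * 2 ^ k ≤
        (n + 1) ^ 2 * 2 ^ (2 * s * k) := by
      rw [Finset.sum_mul]
      calc _ ≤ ∑ ij ∈ Finset.range (n + 1) ×ˢ Finset.range (n + 1), 2 ^ (2 * s * k) :=
            Finset.sum_le_sum (fun ij _ => hc2 ij)
        _ = (n + 1) ^ 2 * 2 ^ (2 * s * k) := by
            simp [Finset.card_product]; ring
    have hc4 : 2 ^ (2 * s * k) * 2 ^ k ≤ (n + 1) ^ 2 * 2 ^ (2 * s * k) := by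
      refine le_trans ?_ hc3
      refine Nat.mul_le_mul_right _ ?_
      refine le_trans (le_of_eq ?_) hc1
      simp
    have hk := h.hk
    rw [← hlen] at hk
    have hpos : 0 < 2 ^ (2 * s * k) := by positivity
    nlinarith
  refine ⟨L.map (fun a => v (sw e a)), ?_, ?_, ?_⟩
  · exact hnd.map (h.hv.comp (sw_inj e))
  · ext x
    simp only [List.mem_toFinset, List.mem_map, Finset.mem_image, Finset.mem_univ, true_and]
    constructor
    · rintro ⟨a, _, rfl⟩
      exact ⟨_, rfl⟩
    · rintro ⟨a, rfl⟩
      exact ⟨sw e a, hmem _, by rw [sw_sw]⟩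
  · intro l1 l2 l3 hl h2 h13
    obtain ⟨u, w, huw, hu, rfl⟩ := List.map_eq_append_iff.mp hl
    obtain ⟨x, y, rfl, rfl, rfl⟩ := List.map_eq_append_iff.mp hu
    have hy0 : y ≠ [] := by simpa using h2
    have hyn : y.Nodup := by
      rw [huw] at hnd
      exact ((List.nodup_append.mp (List.nodup_append.mp hnd).1).2.1)
    have hsum : (y.map (fun a => v (sw e a))).sum = ∑ a ∈ y.toFinset, v (sw e a) :=
      (List.sum_toFinset _ hyn).symm
    rw [hsum]
    by_cases hg : GoodS y.toFinset
    · have hs : seg (x.length, (x ++ y).length) = y.toFinset := by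
        simp only [hseg]
        rw [huw, List.take_left, List.drop_left]
      rw [← hs]
      refine he _ ?_ (by rw [hs]; exact hg)
      have hle : n = x.length + y.length + w.length := by rw [hn, huw]; simp; omega
      simp only [Finset.mem_product, Finset.mem_range, List.length_append]
      omega
    · refine bad_sum h ?_ ?_ ?_ hg e
      · obtain ⟨a, ha⟩ := List.exists_mem_of_ne_nil _ hy0
        exact ⟨a, by simpa using ha⟩
      · rw [huw] at hnd
        rw [List.nodup_append, List.nodup_append] at hnd
        obtain ⟨⟨_, _, hxy⟩, _, hyw⟩ := hnd
        rcases h13 with h' | h'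
        · obtain ⟨a, ha⟩ := List.exists_mem_of_ne_nil x (by simpa using h')
          exact ⟨a, fun hay => hxy a ha a (by simpa using hay) rfl⟩
        · obtain ⟨a, ha⟩ := List.exists_mem_of_ne_nil w (by simpa using h')
          exact ⟨a, fun hay => hyw a (by simp at hay; simp [hay]) a ha rfl⟩
      · intro a ha b hb c hac hcb
        simp only [List.mem_toFinset] at ha hb ⊢
        have hc := hmem c
        rw [huw] at hc hsort
        rw [List.pairwise_append, List.pairwise_append] at hsort
        obtain ⟨⟨_, _, hxy⟩, _, hyw⟩ := hsort
        simp only [List.mem_append] at hc hyw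
        rcases hc with (hc | hc) | hc
        · have : rk ork c ≤ rk ork a := hxy c hc a ha
          omega
        · exact hc
        · have : rk ork b ≤ rk ork c := hyw b (Or.inr hb) c hc
          omega
end


theorem assembleA {G : Type} [AddCommGroup G] [DecidableEq G] (A : Finset G) (m k n0 s : ℕ)
    (b : G → ℕ) (hAm : A.card ≤ m) (hk : (m + 1) ^ 2 < 2 ^ k)
    (hn : (2 * n0 + 1) ^ (4 * k) < 2 ^ n0) (hs : 2 ≤ s) (hb : ∀ a ∈ A, b a ≤ s + 2)
    (hD : ∀ j, j < s → Diss {0} (A.filter (fun a => b a = j)))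
    (hD0 : 4 * k ≤ (A.filter (fun a => b a = 0)).card)
    (hDj : ∀ j, 1 ≤ j → j < s → 2 * k + n0 ≤ (A.filter (fun a => b a = j)).card)
    (hg : ∃ g ∈ A, b g = s + 1)
    (H3 : ∀ B T : Finset G, B ⊆ A → T ⊆ A → B.Nonempty →
      (∀ x ∈ B, b x = 0 ∨ b x = s - 1 ∨ b x = s + 1) → (∀ x ∈ T, b x = s ∨ b x = s + 2) →
      ∑ x ∈ B, x + ∑ x ∈ T, x ≠ 0)
    (H4 : ∀ T : Finset G, T ⊆ A → T.Nonempty → ((∀ x ∈ T, b x = s) ∨ (∀ x ∈ T, b x = s + 2)) →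
      ∑ x ∈ T, x ≠ 0)
    (H5 : ∀ B : Finset G, B ⊆ A → B.Nonempty → (∀ x ∈ B, b x = 0 ∨ b x = s - 1) →
      ∑ x ∈ B, x ≠ ∑ x ∈ A, x) :
    ∃ l : List G, l.Nodup ∧ l.toFinset = A ∧ SegOK l := by
  classical
  set D : ℕ → Finset G := fun j => A.filter (fun a => b a = j) with hDdef
  have hDm : ∀ j x, x ∈ D j ↔ x ∈ A ∧ b x = j := fun j x => by simp [hDdef]
  -- last zones
  have hZl : ∀ j, ∃ Z, j < s → Z ⊆ D j ∧ Z.card = 2 * k := by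
    intro j
    by_cases hj : j < s
    · have : 2 * k ≤ (D j).card := by
        rcases Nat.eq_zero_or_pos j with h | h
        · subst h
          have : 4 * k ≤ (D 0).card := hD0
          omega
        · have : 2 * k + n0 ≤ (D j).card := hDj j h hj
          omega
      obtain ⟨Z, h1, h2⟩ := Finset.exists_subset_card_eq this
      exact ⟨Z, fun _ => ⟨h1, h2⟩⟩
    · exact ⟨∅, fun h => absurd h hj⟩
  choose Zl hZl using hZl
  have hZf : ∀ j, ∃ Z, j < s → Z ⊆ D j \ Zl j ∧ Z.card = 2 * k ∧
      (1 ≤ j → Diss {0} (Zl (j - 1) ∪ Z)) := by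
    intro j
    by_cases hj : j < s
    · have hc := Finset.card_sdiff_of_subset (hZl j hj).1
      rw [(hZl j hj).2] at hc
      rcases Nat.eq_zero_or_pos j with h | h
      · subst h
        have h4 : 4 * k ≤ (D 0).card := hD0
        obtain ⟨Z, h1, h2⟩ := Finset.exists_subset_card_eq (s := D 0 \ Zl 0) (n := 2 * k) (by omega)
        exact ⟨Z, fun _ => ⟨h1, h2, fun h => by omega⟩⟩
      · have h4 : 2 * k + n0 ≤ (D j).card := hDj j h hj
        obtain ⟨Z, h1, h2, h3⟩ := extension hn (D := D j \ Zl j) (Z := Zl (j - 1))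
          (by
            rw [Finset.disjoint_left]
            intro x hx hx'
            have h5 := (hDm _ _).mp ((hZl (j - 1) (by omega)).1 hx')
            have h6 := (hDm _ _).mp (Finset.mem_sdiff.mp hx).1
            omega)
          ((hD j hj).mono Finset.sdiff_subset)
          ((hD (j - 1) (by omega)).mono (hZl (j - 1) (by omega)).1)
          (hZl (j - 1) (by omega)).2 (by omega)
        exact ⟨Z, fun _ => ⟨h1, h2, fun _ => h3⟩⟩
    · exact ⟨∅, fun h => absurd h hj⟩
  choose Zf hZf using hZf
  set Z : ℕ → Finset G := fun z => if z % 2 = 0 then Zf (z / 2) else Zl (z / 2) with hZ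
  have hZsub : ∀ z, z < 2 * s → Z z ⊆ D (z / 2) ∧ (Z z).card = 2 * k := by
    intro z hz
    simp only [hZ]
    split_ifs with h
    · exact ⟨(hZf (z / 2) (by omega)).1.trans Finset.sdiff_subset, (hZf (z / 2) (by omega)).2.1⟩
    · exact hZl (z / 2) (by omega)
  have hZdisj : ∀ z z', z < 2 * s → z' < 2 * s → ∀ x, x ∈ Z z → x ∈ Z z' → z = z' := by
    intro z z' hz hz' x hx hx'
    have h1 := (hDm _ _).mp ((hZsub z hz).1 hx)
    have h2 := (hDm _ _).mp ((hZsub z' hz').1 hx')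
    have hzz : z / 2 = z' / 2 := by rw [← h1.2, h2.2]
    have hnot : ∀ j, j < s → x ∈ Zf j → x ∈ Zl j → False := by
      intro j hj h3 h4
      exact (Finset.mem_sdiff.mp ((hZf j hj).1 h3)).2 h4
    simp only [hZ] at hx hx'
    rw [← hzz] at hx'
    split_ifs at hx hx' with h3 h4 h4
    · omega
    · exact (hnot _ (by omega) hx hx').elim
    · exact (hnot _ (by omega) hx' hx).elim
    · omega
  have hf : ∀ z : Fin (2 * s), ∃ f : Bool × Fin k → G, Function.Injective f ∧ ∀ x, f x ∈ Z z.val := by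
    intro z
    have hc : Fintype.card (Bool × Fin k) = Fintype.card (Z z.val) := by
      simp [(hZsub z.val z.2).2]
    let E := Fintype.equivOfCardEq hc
    exact ⟨fun x => (E x).val, fun x y h => E.injective (Subtype.ext h), fun x => (E x).2⟩
  choose f hf1 hf2 using hf
  set F : Bool × Fin (2 * s) × Fin k → G := fun q => f q.2.1 (q.1, q.2.2) with hF
  set U : Finset G := Finset.univ.image F with hU
  have hFZ : ∀ q, F q ∈ Z q.2.1.val := fun q => hf2 _ _
  have hFD : ∀ q, F q ∈ A ∧ b (F q) = q.2.1.val / 2 := fun q =>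
    (hDm _ _).mp ((hZsub _ q.2.1.2).1 (hFZ q))
  let O := {a : G // a ∈ A \ U}
  set ork : O → ℕ := fun o => if b o.1 < s then 4 * b o.1 + 1 else 4 * s + (b o.1 - s) with hork
  set v : Sl s k O → G := Sum.elim F (fun o => o.1) with hv
  have hvA : ∀ a, v a ∈ A := by
    rintro (q | o)
    · exact (hFD q).1
    · exact (Finset.mem_sdiff.mp o.2).1
  have hvinj : Function.Injective v := by
    rintro (⟨b1, z1, i1⟩ | o1) (⟨b2, z2, i2⟩ | o2) h
    · have hz : z1 = z2 := by
        have h1 := hFZ (b1, z1, i1)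
        have h2 := hFZ (b2, z2, i2)
        have h' : F (b1, z1, i1) = F (b2, z2, i2) := h
        rw [h'] at h1
        exact Fin.ext (hZdisj _ _ z1.2 z2.2 _ h1 h2)
      subst hz
      have := hf1 z1 (a₁ := (b1, i1)) (a₂ := (b2, i2)) h
      simp only [Prod.mk.injEq] at this
      rw [this.1, this.2]
    · exfalso
      have h' : F (b1, z1, i1) = o2.1 := h
      exact (Finset.mem_sdiff.mp o2.2).2 (h' ▸ Finset.mem_image_of_mem _ (Finset.mem_univ _))
    · exfalso
      have h' : o1.1 = F (b2, z2, i2) := h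
      exact (Finset.mem_sdiff.mp o1.2).2 (h' ▸ Finset.mem_image_of_mem _ (Finset.mem_univ _))
    · exact congrArg Sum.inr (Subtype.ext h)
  have himg : Finset.univ.image v = A := by
    ext x
    simp only [Finset.mem_image, Finset.mem_univ, true_and]
    constructor
    · rintro ⟨a, rfl⟩; exact hvA a
    · intro hx
      by_cases hxU : x ∈ U
      · obtain ⟨q, _, rfl⟩ := Finset.mem_image.mp hxU
        exact ⟨Sum.inl q, rfl⟩
      · exact ⟨Sum.inr ⟨x, Finset.mem_sdiff.mpr ⟨hx, hxU⟩⟩, rfl⟩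
  have hcard : Fintype.card (Sl s k O) = A.card := by
    have h1 := congrArg Finset.card himg
    rw [Finset.card_image_of_injective _ hvinj, Finset.card_univ] at h1
    exact h1
  have hsum : ∀ B : Finset (Sl s k O), ∑ a ∈ B, v a = ∑ x ∈ B.image v, x := fun B =>
    (Finset.sum_image (f := fun x => x) (fun a _ c _ h => hvinj h)).symm
  have hsub : ∀ B : Finset (Sl s k O), B.image v ⊆ A := by
    intro B x hx
    obtain ⟨a, _, rfl⟩ := Finset.mem_image.mp hx
    exact hvA a
  have mim : ∀ {P : G → Prop} {B : Finset (Sl s k O)}, (∀ a ∈ B, P (v a)) →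
      ∀ x ∈ B.image v, P x := by
    intro P B hP x hx
    obtain ⟨c, hc, rfl⟩ := Finset.mem_image.mp hx
    exact hP c hc
  have hznZ : ∀ (a : Sl s k O) z, zn a = some z → v a ∈ Z z ∧ z < 2 * s ∧ b (v a) = z / 2 := by
    rintro (q | o) z h
    · simp only [zn, Option.some.injEq] at h
      subst h
      exact ⟨hFZ q, q.2.1.2, (hFD q).2⟩
    · simp [zn] at h
  have horkb : ∀ o : O, (b o.1 < s ∧ ork o = 4 * b o.1 + 1) ∨
      (s ≤ b o.1 ∧ b o.1 ≤ s + 2 ∧ ork o = 4 * s + (b o.1 - s)) := by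
    intro o
    have := hb o.1 (Finset.mem_sdiff.mp o.2).1
    simp only [hork]
    split_ifs with h
    · exact Or.inl ⟨h, rfl⟩
    · exact Or.inr ⟨by omega, this, rfl⟩
  have hcore : CoreHyp s k v ork := by
    refine ⟨hs, hvinj, ?_, ?_, ?_, ?_, ?_, ?_, ?_, ?_⟩
    · intro o
      rcases horkb o with ⟨h1, h2⟩ | ⟨h1, h2, h3⟩
      · exact Or.inl ⟨_, h1, h2⟩
      · right; omega
    · obtain ⟨g, hgA, hgb⟩ := hg
      have hgU : g ∉ U := by
        intro h
        obtain ⟨q, _, rfl⟩ := Finset.mem_image.mp h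
        have := (hFD q).2
        have := q.2.1.2
        omega
      refine ⟨⟨g, Finset.mem_sdiff.mpr ⟨hgA, hgU⟩⟩, ?_⟩
      rcases horkb ⟨g, Finset.mem_sdiff.mpr ⟨hgA, hgU⟩⟩ with ⟨h1, h2⟩ | ⟨h1, h2, h3⟩
      · have h1' : b g < s := h1
        omega
      · have h3' := h3
        simp only [hgb] at h3'
        omega
    · rw [hcard]
      exact lt_of_le_of_lt (Nat.pow_le_pow_left (by omega) 2) hk
    · intro j hj B C hB hC hBC
      have hx : ∀ B : Finset (Sl s k O), (∀ a ∈ B, bl ork a = j) → B.image v ⊆ D j := by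
        intro B hB x hx
        obtain ⟨a, ha, rfl⟩ := Finset.mem_image.mp hx
        refine (hDm _ _).mpr ⟨hvA a, ?_⟩
        have := hB a ha
        rcases a with q | o
        · rw [← this]; exact (hFD q).2
        · simp only [bl] at this
          show b o.1 = j
          rcases horkb o with ⟨h1, h2⟩ | ⟨h1, h2, h3⟩ <;> omega
      rw [hsum, hsum] at hBC
      exact Finset.image_injective hvinj (hD j hj _ (hx B hB) _ (hx C hC) (by simp [hBC]))
    · intro i hi B hne hB
      rw [hsum]
      have h1 := (hZf (i + 1) hi).2.2 (by omega)
      have e1 : Z (2 * i + 1) = Zl i := by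
        simp only [hZ]
        rw [if_neg (by omega), show (2 * i + 1) / 2 = i by omega]
      have e2 : Z (2 * i + 2) = Zf (i + 1) := by
        simp only [hZ]
        rw [if_pos (by omega), show (2 * i + 2) / 2 = i + 1 by omega]
      rw [Nat.add_sub_cancel, ← e1, ← e2] at h1
      refine h1.sum_notMem ?_ (hne.image v)
      refine mim (P := fun x => x ∈ Z (2 * i + 1) ∪ Z (2 * i + 2)) (fun a ha => ?_)
      rcases hB a ha with h | h
      · exact Finset.mem_union_left _ (hznZ _ _ h).1
      · exact Finset.mem_union_right _ (hznZ _ _ h).1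
    · intro B T hne hB hT
      rw [hsum, hsum]
      refine H3 _ _ (hsub B) (hsub T) (hne.image v) (mim fun a ha => ?_) (mim fun a ha => ?_)
      · rcases hB a ha with h | h | ⟨o, rfl, h⟩
        · have := (hznZ _ _ h).2.2
          omega
        · have := (hznZ _ _ h).2.2
          omega
        · show b o.1 = 0 ∨ b o.1 = _ ∨ b o.1 = _
          rcases horkb o with ⟨h1, h2⟩ | ⟨h1, h2, h3⟩ <;> omega
      · obtain ⟨o, rfl, h⟩ := hT a ha
        show b o.1 = _ ∨ b o.1 = _
        rcases horkb o with ⟨h1, h2⟩ | ⟨h1, h2, h3⟩ <;> omega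
    · intro T hne hT
      rw [hsum]
      refine H4 _ (hsub T) (hne.image v) ?_
      rcases hT with hT | hT
      · left
        refine mim fun a ha => ?_
        obtain ⟨o, rfl, h⟩ := hT a ha
        show b o.1 = _
        rcases horkb o with ⟨h1, h2⟩ | ⟨h1, h2, h3⟩ <;> omega
      · right
        refine mim fun a ha => ?_
        obtain ⟨o, rfl, h⟩ := hT a ha
        show b o.1 = _
        rcases horkb o with ⟨h1, h2⟩ | ⟨h1, h2, h3⟩ <;> omega
    · intro B hne hB
      rw [hsum, hsum Finset.univ, himg]
      refine H5 _ (hsub B) (hne.image v) (mim fun a ha => ?_)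
      rcases hB a ha with h | h
      · have := (hznZ _ _ h).2.2
        omega
      · have := (hznZ _ _ h).2.2
        omega
  obtain ⟨l, h1, h2, h3⟩ := core hcore
  exact ⟨l, h1, h2.trans himg, h3⟩


theorem main_param {p : ℕ} [Fact p.Prime] (A : Finset (ZMod p)) (hA0 : (0 : ZMod p) ∉ A)
    (m k n0 q R N M N' : ℕ) (hm1 : 1 ≤ m) (hAm : A.card ≤ m) (hk : (m + 1) ^ 2 < 2 ^ k)
    (hn : (2 * n0 + 1) ^ (4 * k) < 2 ^ n0) (hq : q = 6 * k + n0 + 1) (hR : R = 8 * k + 2 * n0 + 1)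
    (hN : N = 8 * q * m) (hM : M = N ^ q) (hN' : N' = 8 * m ^ 2 * R * M) (hp : N' ^ R < p) :
    Sequenceable A := by
  classical
  have hp0 : 0 < p := (Fact.out : p.Prime).pos
  have hNpos : 0 < N := by rw [hN]; exact Nat.mul_pos (by omega) hm1
  have hMpos : 0 < M := by rw [hM]; positivity
  have hRpos : 0 < R := by omega
  have hN'pos : 0 < N' := by rw [hN']; positivity
  have hMp : M < p := by
    have h1 : M ≤ N' := by
      rw [hN']
      exact Nat.le_mul_of_pos_left _ (by positivity)
    have h2 : N' ≤ N' ^ R := Nat.le_self_pow (by omega) _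
    omega
  have hunit : ∀ μ : ℕ, 1 ≤ μ → μ < p → (μ : ZMod p) ≠ 0 := by
    intro μ h1 h2 h0
    rw [ZMod.natCast_eq_zero_iff] at h0
    exact absurd (Nat.le_of_dvd (by omega) h0) (by omega)
  obtain ⟨n, blk, hb1, hb2, hb3⟩ := decomposition (R := R) (by omega) A.card A rfl
  set V := A.filter (fun a => blk a = 0) with hV
  obtain ⟨T, hTV, hTD, hTmax⟩ := exists_maxP (fun T => Diss ({0} : Set (ZMod p)) T) Diss.empty V
  have hTc : T.card < R := by
    by_contra hc
    push Not at hc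
    obtain ⟨T', h1, h2⟩ := Finset.exists_subset_card_eq hc
    exact hb3 T' (h1.trans hTV) (hTD.mono h1) h2
  obtain ⟨lam, hl1, hl2, hl3⟩ := dirichlet T N' (N' ^ R) hN'pos
    (Nat.pow_le_pow_right hN'pos hTc.le)
  have hlam : (lam : ZMod p) ≠ 0 := hunit lam hl1 (by omega)
  choose! zt hzt1 hzt2 using hl3
  -- combination lemma
  have hcomb : ∀ (K : ZMod p) (Q : Finset (ZMod p)) (c : ZMod p → ℤ) (z : ZMod p → ℤ) (n : ℕ),
      (∀ u, |c u| ≤ 1) → (∀ u ∈ Q, (z u : ZMod p) = K * u ∧ (n : ℤ) * |z u| ≤ p) →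
      ((∑ u ∈ Q, c u * z u : ℤ) : ZMod p) = K * ∑ u ∈ Q, c u • u ∧
      (n : ℤ) * |∑ u ∈ Q, c u * z u| ≤ Q.card * p := by
    intro K Q c z n hc hz
    constructor
    · push_cast
      rw [Finset.mul_sum]
      refine Finset.sum_congr rfl (fun u hu => ?_)
      rw [(hz u hu).1, zsmul_eq_mul]
      ring
    · calc (n : ℤ) * |∑ u ∈ Q, c u * z u| ≤ n * ∑ u ∈ Q, |c u * z u| := by
            gcongr
            exact Finset.abs_sum_le_sum_abs _ _
        _ = ∑ u ∈ Q, n * |c u * z u| := Finset.mul_sum _ _ _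
        _ ≤ ∑ u ∈ Q, (p : ℤ) := by
            refine Finset.sum_le_sum (fun u hu => ?_)
            rw [abs_mul]
            have h1 := hc u
            have h2 := (hz u hu).2
            have h3 := abs_nonneg (z u)
            calc (n : ℤ) * (|c u| * |z u|) ≤ n * (1 * |z u|) := by gcongr
              _ ≤ p := by rw [one_mul]; exact h2
        _ = Q.card * p := by simp
  have hVz : ∀ a ∈ V, ∃ z : ℤ, (z : ZMod p) = lam * a ∧ (N' : ℤ) * |z| ≤ R * p := by
    intro a ha
    obtain ⟨c, hc, h, hh, he⟩ := span_of (H := {0}) (by simp) (by simp) hTD (hTmax a ha)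
    rw [Set.mem_singleton_iff.mp hh, add_zero] at he
    obtain ⟨h1, h2⟩ := hcomb lam T c zt N' hc (fun u hu => ⟨hzt1 u hu, hzt2 u hu⟩)
    refine ⟨∑ u ∈ T, c u * zt u, ?_, ?_⟩
    · rw [h1, ← he]
    · refine h2.trans ?_
      have : (T.card : ℤ) ≤ R := by exact_mod_cast hTc.le
      gcongr
  choose! zv hzv1 hzv2 using hVz
  set H : Set (ZMod p) := {x | ∃ z : ℤ, (z : ZMod p) = lam * x ∧ (N' : ℤ) * |z| ≤ m * R * p} with hH
  have hH0 : (0 : ZMod p) ∈ H := ⟨0, by simp, by simp; positivity⟩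
  have hHneg : ∀ x ∈ H, -x ∈ H := by
    rintro x ⟨z, h1, h2⟩
    exact ⟨-z, by push_cast; rw [h1]; ring, by rwa [abs_neg]⟩
  have hVsum : ∀ S, S ⊆ V → ((∑ a ∈ S, zv a : ℤ) : ZMod p) = lam * ∑ a ∈ S, a ∧
      (N' : ℤ) * |∑ a ∈ S, zv a| ≤ m * R * p := by
    intro S hS
    constructor
    · push_cast
      rw [Finset.mul_sum]
      exact Finset.sum_congr rfl (fun a ha => hzv1 a (hS ha))
    · have hSm : (S.card : ℤ) ≤ m := by
        have := Finset.card_le_card (hS.trans (Finset.filter_subset _ _))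
        exact_mod_cast this.trans hAm
      calc (N' : ℤ) * |∑ u ∈ S, zv u| ≤ N' * ∑ u ∈ S, |zv u| := by
            gcongr
            exact Finset.abs_sum_le_sum_abs _ _
        _ = ∑ u ∈ S, N' * |zv u| := Finset.mul_sum _ _ _
        _ ≤ ∑ u ∈ S, (R * p : ℤ) := Finset.sum_le_sum (fun u hu => hzv2 u (hS hu))
        _ = S.card * (R * p) := by simp
        _ ≤ m * (R * p) := by gcongr
        _ = m * R * p := by ring
  have hred : ∀ z : ℤ, (N' : ℤ) * |z| ≤ m * R * p → 8 * m * M * |z| ≤ p := by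
    intro z hz
    rw [hN'] at hz
    push_cast at hz
    have h1 : (0 : ℤ) < m * R := by positivity
    refine le_of_mul_le_mul_left ?_ h1
    calc (m * R : ℤ) * (8 * m * M * |z|) = 8 * m ^ 2 * R * M * |z| := by ring
      _ ≤ m * R * p := hz
  obtain ⟨Q, hQA, hQD, hQmax⟩ := exists_maxP (fun Q => Diss H Q) Diss.empty A
  rcases Nat.lt_or_ge Q.card q with hQc | hQc
  · -- small case
    obtain ⟨mu, hu1, hu2, hu3⟩ := dirichlet (Q.image (fun x => (lam : ZMod p) * x)) N M hNpos (by
      rw [hM]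
      exact Nat.pow_le_pow_right hNpos (Finset.card_image_le.trans hQc.le))
    have hmu : (mu : ZMod p) ≠ 0 := hunit mu hu1 (by omega)
    have hu4 : ∀ u ∈ Q, ∃ z : ℤ, (z : ZMod p) = (mu * lam : ZMod p) * u ∧ (N : ℤ) * |z| ≤ p := by
      intro u hu
      obtain ⟨z, h1, h2⟩ := hu3 _ (Finset.mem_image_of_mem _ hu)
      exact ⟨z, by rw [h1]; ring, h2⟩
    choose! zq hzq using hu4
    refine small_case A hA0 (mu * lam) (mul_ne_zero hmu hlam) m hAm (fun a ha => ?_)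
    obtain ⟨c, hc, h, ⟨zh, hh1, hh2⟩, he⟩ := span_of hHneg hH0 hQD (hQmax a ha)
    obtain ⟨h1, h2⟩ := hcomb (mu * lam) Q c zq N hc hzq
    refine ⟨∑ u ∈ Q, c u * zq u + mu * zh, ?_, ?_⟩
    · rw [Int.cast_add, h1, he]
      push_cast
      rw [hh1]
      ring
    · have h3 := hred zh hh2
      set w := ∑ u ∈ Q, c u * zq u
      have h4 : (8 * m : ℤ) * |w| ≤ p := by
        have hq0 : (0 : ℤ) < q := by
          have : 0 < q := by omega
          exact_mod_cast this
        refine le_of_mul_le_mul_left ?_ hq0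
        calc (q : ℤ) * (8 * m * |w|) = N * |w| := by rw [hN]; push_cast; ring
          _ ≤ Q.card * p := h2
          _ ≤ q * p := by
            have : (Q.card : ℤ) ≤ q := by exact_mod_cast hQc.le
            gcongr
      have h5 : |w + mu * zh| ≤ |w| + M * |zh| := by
        refine (abs_add_le _ _).trans ?_
        rw [abs_mul]
        have : |(mu : ℤ)| ≤ M := by
          rw [Nat.abs_cast]; exact_mod_cast hu2
        gcongr
      have h6 : (8 * m : ℤ) * |w + mu * zh| ≤ 2 * p := by
        calc (8 * m : ℤ) * |w + mu * zh| ≤ 8 * m * (|w| + M * |zh|) := by gcongr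
          _ = 8 * m * |w| + 8 * m * M * |zh| := by ring
          _ ≤ 2 * p := by linarith
      have : (0 : ℤ) < p := by exact_mod_cast hp0
      linarith
  · obtain ⟨Q0, hQ0, hQ0c⟩ := Finset.exists_subset_card_eq hQc
    have hQ0D : Diss H Q0 := hQD.mono hQ0
    have hQ0A : Q0 ⊆ A := hQ0.trans hQA
    have hHsub : ({0} : Set (ZMod p)) ⊆ H := by
      intro x hx
      rw [Set.mem_singleton_iff.mp hx]; exact hH0
    have hQ0D0 : Diss {0} Q0 := hQ0D.monoH hHsub
    obtain ⟨g, hgQ, hg⟩ : ∃ g ∈ Q0, ∀ B, B ⊆ Q0.erase g → B.Nonempty →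
        ∑ x ∈ B, x ≠ ∑ x ∈ A, x := by
      by_cases hex : ∃ B0, B0 ⊆ Q0 ∧ B0.Nonempty ∧ ∑ x ∈ B0, x = ∑ x ∈ A, x
      · obtain ⟨B0, h1, ⟨g, hgB⟩, h2⟩ := hex
        refine ⟨g, h1 hgB, fun B hB _ hBt => ?_⟩
        have := hQ0D0 B (hB.trans (Finset.erase_subset _ _)) B0 h1 (by simp [hBt, h2])
        rw [← this] at hgB
        exact Finset.notMem_erase g Q0 (hB hgB)
      · push Not at hex
        have : Q0.Nonempty := by rw [← Finset.card_pos]; omega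
        obtain ⟨g, hgQ⟩ := this
        exact ⟨g, hgQ, fun B hB hne => hex B (hB.trans (Finset.erase_subset _ _)) hne⟩
    have hec := Finset.card_erase_of_mem hgQ
    obtain ⟨Q1, hQ1, hQ1c⟩ := Finset.exists_subset_card_eq (s := Q0.erase g) (n := 4 * k) (by omega)
    set b : ZMod p → ℕ := fun a => if a = g then n + 3 else if a ∈ Q1 then 0 else
      if a ∈ Q0 then n + 1 else if blk a = 0 then (if 0 < zv a then n + 2 else n + 4) else blk a
      with hbdef
    have hQ1g : ∀ a ∈ Q1, a ≠ g ∧ a ∈ Q0 := fun a ha => Finset.mem_erase.mp (hQ1 ha)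
    -- characterization
    have hbc : ∀ a ∈ A, (a = g ∧ b a = n + 3) ∨ (a ≠ g ∧ a ∈ Q1 ∧ a ∈ Q0 ∧ b a = 0) ∨
        (a ≠ g ∧ a ∉ Q1 ∧ a ∈ Q0 ∧ b a = n + 1) ∨
        (a ∉ Q0 ∧ a ∈ V ∧ 0 < zv a ∧ b a = n + 2) ∨ (a ∉ Q0 ∧ a ∈ V ∧ zv a ≤ 0 ∧ b a = n + 4) ∨
        (a ∉ Q0 ∧ 1 ≤ blk a ∧ blk a ≤ n ∧ b a = blk a) := by
      intro a ha
      have hle := hb1 a ha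
      simp only [hbdef]
      by_cases h1 : a = g
      · left; simp [h1]
      by_cases h2 : a ∈ Q1
      · right; left; simp [h1, h2, (hQ1g a h2).2]
      by_cases h3 : a ∈ Q0
      · right; right; left; simp [h1, h2, h3]
      right; right; right
      by_cases h4 : blk a = 0
      · have hVa : a ∈ V := Finset.mem_filter.mpr ⟨ha, h4⟩
        by_cases h5 : 0 < zv a
        · left; simp [h1, h2, h3, h4, h5, hVa]
        · right; left
          have : zv a ≤ 0 := by omega
          simp [h1, h2, h3, h4, h5, hVa, this]
      · right; right
        refine ⟨h3, by omega, hle, ?_⟩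
        simp [h1, h2, h3, h4]
    have hfin := assembleA A m k n0 (n + 2) b hAm hk hn (by omega)
      (fun a ha => by rcases hbc a ha with h | h | h | h | h | h <;> omega)
      (fun j hj => by
        by_cases hj' : 1 ≤ j ∧ j ≤ n
        · refine (hb2 j hj'.1 hj'.2).1.mono (fun a ha => ?_)
          rw [Finset.mem_filter] at ha ⊢
          refine ⟨ha.1, ?_⟩
          rcases hbc a ha.1 with h | h | h | h | h | h <;> omega
        · refine hQ0D0.mono (fun a ha => ?_)
          rw [Finset.mem_filter] at ha
          rcases hbc a ha.1 with h | h | h | h | h | h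
          · rw [h.1]; exact hgQ
          · exact h.2.2.1
          · exact h.2.2.1
          all_goals omega)
      (by
        rw [← hQ1c]
        refine Finset.card_le_card (fun a ha => ?_)
        have ha2 := hQ1g a ha
        rw [Finset.mem_filter]
        refine ⟨hQ0A ha2.2, ?_⟩
        simp [hbdef, ha2.1, ha])
      (fun j hj1 hj2 => by
        by_cases hj' : j ≤ n
        · have hc := (hb2 j hj1 hj').2
          have h1 := Finset.le_card_sdiff Q0 (A.filter (fun a => blk a = j))
          refine le_trans ?_ (Finset.card_le_card (s := A.filter (fun a => blk a = j) \ Q0) ?_)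
          · omega
          · intro a ha
            rw [Finset.mem_sdiff, Finset.mem_filter] at ha
            rw [Finset.mem_filter]
            refine ⟨ha.1.1, ?_⟩
            have haV : a ∈ V → blk a = 0 := fun h => (Finset.mem_filter.mp h).2
            rcases hbc a ha.1.1 with h | h | h | h | h | h
            · exact absurd (h.1 ▸ hgQ) ha.2
            · exact absurd h.2.2.1 ha.2
            · exact absurd h.2.2.1 ha.2
            · have := haV h.2.1; omega
            · have := haV h.2.1; omega
            · omega
        · have hjn : j = n + 1 := by omega
          subst hjn
          have h1 := Finset.le_card_sdiff Q1 (Q0.erase g)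
          refine le_trans ?_ (Finset.card_le_card (s := Q0.erase g \ Q1) ?_)
          · omega
          · intro a ha
            rw [Finset.mem_sdiff, Finset.mem_erase] at ha
            rw [Finset.mem_filter]
            refine ⟨hQ0A ha.1.2, ?_⟩
            simp [hbdef, ha.1.1, ha.1.2, ha.2])
      ⟨g, hQ0A hgQ, by simp [hbdef]⟩
      (by
        intro B S hB hS hne hBb hSb h0
        have hBQ : B ⊆ Q0 := by
          intro a ha
          have := hBb a ha
          rcases hbc a (hB ha) with h | h | h | h | h | h
          · rw [h.1]; exact hgQ
          · exact h.2.2.1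
          · exact h.2.2.1
          all_goals omega
        have hSV : S ⊆ V := by
          intro a ha
          have := hSb a ha
          rcases hbc a (hS ha) with h | h | h | h | h | h
          · omega
          · omega
          · omega
          · exact h.2.1
          · exact h.2.1
          · omega
        have h1 : ∑ x ∈ S, x ∈ H := ⟨_, hVsum S hSV⟩
        have h2 : ∑ x ∈ B, x = - ∑ x ∈ S, x := eq_neg_of_add_eq_zero_left h0
        exact hQ0D.sum_notMem hBQ hne (h2 ▸ hHneg _ h1))
      (by
        intro S hS hne hSb h0
        have hSV : S ⊆ V := by
          intro a ha
          have : b a = n + 2 ∨ b a = n + 2 + 2 := by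
            rcases hSb with h | h
            · exact Or.inl (h a ha)
            · exact Or.inr (h a ha)
          rcases hbc a (hS ha) with h | h | h | h | h | h
          · omega
          · omega
          · omega
          · exact h.2.1
          · exact h.2.1
          · omega
        have hzne : ∀ a ∈ S, zv a ≠ 0 := by
          intro a ha hz
          have := hzv1 a (hSV ha)
          rw [hz, Int.cast_zero] at this
          rcases mul_eq_zero.mp this.symm with h | h
          · exact hlam h
          · exact hA0 (h ▸ hS ha)
        have hsne : ∑ a ∈ S, zv a ≠ 0 := by
          rcases hSb with h | h
          · refine (Finset.sum_pos (fun a ha => ?_) hne).ne'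
            have := h a ha
            rcases hbc a (hS ha) with h | h | h | h | h | h <;> omega
          · refine (Finset.sum_neg (fun a ha => ?_) hne).ne
            have := h a ha
            have := hzne a ha
            rcases hbc a (hS ha) with h | h | h | h | h | h <;> omega
        obtain ⟨h1, h2⟩ := hVsum S hSV
        rw [h0, mul_zero, ZMod.intCast_zmod_eq_zero_iff_dvd] at h1
        have h3 := hred _ h2
        have h4 := Int.le_of_dvd (abs_pos.mpr hsne) ((dvd_abs _ _).mpr h1)
        have h5 : (1 : ℤ) ≤ m * M := by
          have : 1 ≤ m * M := Nat.one_le_iff_ne_zero.mpr (by positivity)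
          exact_mod_cast this
        have : (0 : ℤ) < p := by exact_mod_cast hp0
        nlinarith)
      (by
        intro B hB hne hBb
        refine hg B (fun a ha => ?_) hne
        have := hBb a ha
        rw [Finset.mem_erase]
        rcases hbc a (hB ha) with h | h | h | h | h | h
        · omega
        · exact ⟨h.1, h.2.2.1⟩
        · exact ⟨h.1, h.2.2.1⟩
        all_goals omega)
    obtain ⟨l, h1, h2, h3⟩ := hfin
    exact ⟨l, h1, h2, h3.isSeq⟩


theorem cube_le (u : ℕ) : u ^ 3 ≤ 2 ^ (3 * u) := by
  rw [mul_comm, pow_mul]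
  exact Nat.pow_le_pow_left Nat.lt_two_pow_self.le 3

theorem main_u {p : ℕ} [Fact p.Prime] (A : Finset (ZMod p)) (hA0 : (0 : ZMod p) ∉ A)
    (m u : ℕ) (hm1 : 1 ≤ m) (hu : 1 ≤ u) (hAm : A.card ≤ m) (hk : (m + 1) ^ 2 < 2 ^ (u ^ 2))
    (hp : 2 ^ (138233 * u ^ 8) < p) : Sequenceable A := by
  have hu2 : u ≤ u ^ 2 := by nlinarith
  have hu23 : u ^ 2 ≤ u ^ 3 := Nat.pow_le_pow_right hu (by omega)
  have hu25 : u ^ 2 ≤ u ^ 5 := Nat.pow_le_pow_right hu (by omega)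
  have hu1 : 1 ≤ u ^ 2 := Nat.one_le_pow _ _ hu
  have hu3 : 1 ≤ u ^ 3 := Nat.one_le_pow _ _ hu
  have hcube : u ^ 3 ≤ 2 ^ (3 * u ^ 2) :=
    (cube_le u).trans (Nat.pow_le_pow_right (by omega) (by omega))
  have hm2 : m ^ 2 ≤ 2 ^ (u ^ 2) := by nlinarith
  have hm : m ≤ 2 ^ (u ^ 2) := by nlinarith
  have hn : (2 * (64 * u ^ 3) + 1) ^ (4 * u ^ 2) < 2 ^ (64 * u ^ 3) := by
    have e : 2 ^ (64 * u ^ 3) = (2 ^ (16 * u)) ^ (4 * u ^ 2) := by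
      rw [← pow_mul]; congr 1; ring
    rw [e]
    refine Nat.pow_lt_pow_left ?_ (by positivity)
    have h1 := cube_le u
    have h2 : 2 ^ (8 + 3 * u) ≤ 2 ^ (16 * u) := Nat.pow_le_pow_right (by omega) (by omega)
    rw [pow_add] at h2
    omega
  set q := 6 * u ^ 2 + 64 * u ^ 3 + 1 with hq
  set R := 8 * u ^ 2 + 2 * (64 * u ^ 3) + 1 with hR
  have hq' : q ≤ 71 * u ^ 3 := by omega
  have hR' : R ≤ 137 * u ^ 3 := by omega
  have hN : 8 * q * m ≤ 2 ^ (14 * u ^ 2) := by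
    calc 8 * q * m ≤ 2 ^ (10 * u ^ 2) * 2 ^ (3 * u ^ 2) * 2 ^ (u ^ 2) := by
          refine Nat.mul_le_mul ?_ hm
          calc 8 * q ≤ 2 ^ 10 * u ^ 3 := by omega
            _ ≤ 2 ^ (10 * u ^ 2) * 2 ^ (3 * u ^ 2) :=
              Nat.mul_le_mul (Nat.pow_le_pow_right (by omega) (by omega)) hcube
      _ = 2 ^ (14 * u ^ 2) := by rw [← pow_add, ← pow_add]; congr 1; ring
  have hM : (8 * q * m) ^ q ≤ 2 ^ (994 * u ^ 5) := by
    calc (8 * q * m) ^ q ≤ (2 ^ (14 * u ^ 2)) ^ q := Nat.pow_le_pow_left hN _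
      _ = 2 ^ (14 * u ^ 2 * q) := by rw [← pow_mul]
      _ ≤ 2 ^ (14 * u ^ 2 * (71 * u ^ 3)) :=
        Nat.pow_le_pow_right (by omega) (Nat.mul_le_mul_left _ hq')
      _ = 2 ^ (994 * u ^ 5) := by congr 1; ring
  have hN' : 8 * m ^ 2 * R * (8 * q * m) ^ q ≤ 2 ^ (1009 * u ^ 5) := by
    calc 8 * m ^ 2 * R * (8 * q * m) ^ q
        ≤ 2 ^ 3 * 2 ^ (u ^ 2) * (2 ^ 8 * 2 ^ (3 * u ^ 2)) * 2 ^ (994 * u ^ 5) := by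
          refine Nat.mul_le_mul (Nat.mul_le_mul (Nat.mul_le_mul (by norm_num) hm2) ?_) hM
          omega
      _ = 2 ^ (3 + u ^ 2 + (8 + 3 * u ^ 2) + 994 * u ^ 5) := by simp only [pow_add]
      _ ≤ 2 ^ (1009 * u ^ 5) := Nat.pow_le_pow_right (by omega) (by omega)
  refine main_param A hA0 m (u ^ 2) (64 * u ^ 3) q R _ _ _ hm1 hAm hk hn rfl rfl rfl rfl rfl ?_
  refine lt_of_le_of_lt ?_ hp
  calc (8 * m ^ 2 * R * (8 * q * m) ^ q) ^ R ≤ (2 ^ (1009 * u ^ 5)) ^ R :=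
        Nat.pow_le_pow_left hN' _
    _ = 2 ^ (1009 * u ^ 5 * R) := by rw [← pow_mul]
    _ ≤ 2 ^ (1009 * u ^ 5 * (137 * u ^ 3)) :=
      Nat.pow_le_pow_right (by omega) (Nat.mul_le_mul_left _ hR')
    _ = 2 ^ (138233 * u ^ 8) := by congr 1; ring

theorem bedert_kravitz_bound :
    ∃ c : ℝ, 0 < c ∧ ∃ p₀ : ℕ,
      ∀ p : ℕ, p.Prime → p₀ ≤ p →
        ∀ A : Finset (ZMod p), (0 : ZMod p) ∉ A →
          (A.card : ℝ) ≤ Real.exp (c * (Real.log (p : ℝ)) ^ ((1 : ℝ) / 4)) →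
            Sequenceable A := by
  set K : ℝ := (138233 : ℝ) ^ ((1 : ℝ) / 4) with hK
  have hKpos : 0 < K := Real.rpow_pos_of_pos (by norm_num) _
  refine ⟨1 / (64 * K), by positivity, ⌈Real.exp (138233 * 256)⌉₊, ?_⟩
  intro p hpp hp0 A hA0 hA
  have : Fact p.Prime := ⟨hpp⟩
  have hppos : (0 : ℝ) < p := by exact_mod_cast hpp.pos
  set L := Real.log (p : ℝ) with hL
  have hL1 : 138233 * 256 ≤ L := by
    rw [hL, Real.le_log_iff_exp_le hppos]
    exact (Nat.le_ceil _).trans (by exact_mod_cast hp0)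
  set y := L / 138233 with hy
  have hy1 : 256 ≤ y := by rw [hy, le_div_iff₀ (by norm_num)]; linarith
  have hLy : L = 138233 * y := by rw [hy]; field_simp
  set x := y ^ ((1 : ℝ) / 8) with hx
  have hx0 : 0 ≤ x := Real.rpow_nonneg (by linarith) _
  have hx8 : x ^ 8 = y := by
    rw [hx, ← Real.rpow_natCast, ← Real.rpow_mul (by linarith)]
    norm_num
  have hx2 : x ^ 2 = y ^ ((1 : ℝ) / 4) := by
    rw [hx, ← Real.rpow_natCast, ← Real.rpow_mul (by linarith)]
    norm_num
  have hxge : 2 ≤ x := by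
    by_contra h
    push Not at h
    have : x ^ 8 < 2 ^ 8 := pow_lt_pow_left₀ h hx0 (by norm_num)
    rw [hx8] at this
    norm_num at this
    linarith
  have hLr : L ^ ((1 : ℝ) / 4) = K * x ^ 2 := by
    rw [hLy, Real.mul_rpow (by norm_num) (by linarith), hx2]
  set u := ⌊x⌋₊ with hu
  have hu2 : 2 ≤ u := Nat.le_floor (by exact_mod_cast hxge)
  have hux : (u : ℝ) ≤ x := Nat.floor_le hx0
  have hxu : x < u + 1 := Nat.lt_floor_add_one x
  have hu2r : (2 : ℝ) ≤ u := by exact_mod_cast hu2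
  have hxx : x ^ 2 ≤ 4 * (u : ℝ) ^ 2 := by nlinarith
  have hcL : 1 / (64 * K) * L ^ ((1 : ℝ) / 4) = x ^ 2 / 64 := by
    rw [hLr]; field_simp
  rw [hcL] at hA
  set m := max 1 A.card with hm
  have hmr : (m : ℝ) ≤ Real.exp ((u : ℝ) ^ 2 / 16) := by
    rw [hm, Nat.cast_max]
    apply max_le
    · rw [Nat.cast_one]
      exact Real.one_le_exp (by positivity)
    · refine hA.trans (Real.exp_le_exp.mpr ?_)
      linarith
  have hm1 : 1 ≤ m := le_max_left _ _
  have hm1r : (1 : ℝ) ≤ m := by exact_mod_cast hm1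
  have hl2 := Real.log_two_gt_d9
  have hl2' := Real.log_two_lt_d9
  refine main_u A hA0 m u hm1 (by omega) (le_max_right _ _) ?_ ?_
  · have : ((m : ℝ) + 1) ^ 2 < 2 ^ (u ^ 2) := by
      calc ((m : ℝ) + 1) ^ 2 ≤ (2 * m) ^ 2 := by gcongr; linarith
        _ ≤ (2 * Real.exp ((u : ℝ) ^ 2 / 16)) ^ 2 := by gcongr
        _ = Real.exp (2 * Real.log 2 + (u : ℝ) ^ 2 / 8) := by
          rw [Real.exp_add, mul_pow, two_mul (Real.log 2), Real.exp_add, Real.exp_log (by norm_num),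
            ← Real.exp_nat_mul]
          push_cast
          ring_nf
        _ < Real.exp (Real.log 2 * ((u ^ 2 : ℕ) : ℝ)) := by
          apply Real.exp_lt_exp.mpr
          push_cast
          nlinarith
        _ = 2 ^ (u ^ 2) := by
          rw [Real.exp_mul, Real.exp_log (by norm_num), Real.rpow_natCast]
    exact_mod_cast this
  · have : (2 : ℝ) ^ (138233 * u ^ 8) < p := by
      calc (2 : ℝ) ^ (138233 * u ^ 8) = Real.exp (Real.log 2 * ((138233 * u ^ 8 : ℕ) : ℝ)) := by
            rw [Real.exp_mul, Real.exp_log (by norm_num), Real.rpow_natCast]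
        _ < Real.exp L := by
          apply Real.exp_lt_exp.mpr
          push_cast
          have h8 : (u : ℝ) ^ 8 ≤ y := by
            rw [← hx8]; gcongr
          rw [hLy]
          have : (0 : ℝ) < (u : ℝ) ^ 8 := by positivity
          nlinarith
        _ = p := by rw [hL, Real.exp_log hppos]
    exact_mod_cast this
end

section
/- There exists an absolute constant c_1 > 0 such that the following holds: for every integer k ≥ 2 with least prime divisor p, if B ⊆ ℤ_k is a nonempty subset with dim(B) < c_1·(log p)^{1/2}, then there exists a unit λ ∈ ℤ_k^× such that every element of the dilate λ·B = {λb : b ∈ B} has an integer representative of absolute value strictly less than k/(100|B|), i.e. λ·B is contained in the interval (−k/(100|B|), k/(100|B|)). -/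
/-- A finite subset `D` of an abelian group is *dissociated* if no nontrivial
`{-1,0,1}`-combination of its elements vanishes. -/
def Dissociated {G : Type*} [AddCommGroup G] (D : Finset G) : Prop :=
  ∀ ε : G → ℤ, (∀ d ∈ D, ε d = -1 ∨ ε d = 0 ∨ ε d = 1) →
    (∑ d ∈ D, ε d • d) = 0 → ∀ d ∈ D, ε d = 0

/-- The *dimension* of a finite subset `B` of an abelian group: the size of the largest
dissociated subset of `B`. -/
noncomputable def dimension {G : Type*} [AddCommGroup G] [DecidableEq G] (B : Finset G) : ℕ :=
  (@Finset.filter _ (fun D => Dissociated D) (Classical.decPred _) B.powerset).sup Finset.card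

/-- `x ∈ ZMod k` has an integer representative lying strictly between the reals `a` and `b`. -/
def MemInterval {k : ℕ} (x : ZMod k) (a b : ℝ) : Prop :=
  ∃ m : ℤ, (m : ZMod k) = x ∧ a < (m : ℝ) ∧ (m : ℝ) < b

lemma aux_span {G : Type*} [AddCommGroup G] [DecidableEq G] (B : Finset G) :
    ∃ D : Finset G, D.card = dimension B ∧ ∀ b ∈ B, ∃ ε : G → ℤ,
      (∀ d ∈ D, ε d = -1 ∨ ε d = 0 ∨ ε d = 1) ∧ b = ∑ d ∈ D, ε d • d := by
  classical
  have hne : (@Finset.filter _ (fun D => Dissociated D) (Classical.decPred _) B.powerset).Nonempty := by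
    refine ⟨∅, ?_⟩
    rw [Finset.mem_filter]
    exact ⟨by simp, by simp [Dissociated]⟩
  obtain ⟨D, hD, hmax⟩ := Finset.exists_mem_eq_sup _ hne Finset.card
  have hD' := hD
  rw [Finset.mem_filter, Finset.mem_powerset] at hD'
  obtain ⟨hDB, hdis⟩ := hD'
  refine ⟨D, hmax.symm, ?_⟩
  intro b hb
  by_cases hbD : b ∈ D
  · refine ⟨fun d => if d = b then 1 else 0, ?_, ?_⟩
    · intro d _
      dsimp only
      split_ifs <;> simp
    · simp [ite_smul, hbD]
  · have hnot : ¬ Dissociated (insert b D) := by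
      intro h
      have h1 : insert b D ∈ (@Finset.filter _ (fun D => Dissociated D) (Classical.decPred _) B.powerset) := by
        rw [Finset.mem_filter, Finset.mem_powerset]
        exact ⟨Finset.insert_subset hb hDB, h⟩
      have h2 := Finset.le_sup (f := Finset.card) h1
      rw [hmax, Finset.card_insert_of_notMem hbD] at h2
      omega
    unfold Dissociated at hnot
    push Not at hnot
    obtain ⟨ε, hε, hsum, d0, hd0, hd0'⟩ := hnot
    rw [Finset.sum_insert hbD] at hsum
    have hεD : ∀ d ∈ D, ε d = -1 ∨ ε d = 0 ∨ ε d = 1 :=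
      fun d hd => hε d (Finset.mem_insert_of_mem hd)
    rcases hε b (Finset.mem_insert_self _ _) with h | h | h
    · refine ⟨ε, hεD, ?_⟩
      rw [h, neg_one_smul] at hsum
      exact (neg_add_eq_zero.mp hsum)
    · exfalso
      rw [h, zero_smul, zero_add] at hsum
      have h3 := hdis ε hεD hsum
      rcases Finset.mem_insert.mp hd0 with h4 | h4
      · exact hd0' (h4 ▸ h)
      · exact hd0' (h3 d0 h4)
    · refine ⟨fun d => - ε d, ?_, ?_⟩
      · intro d hd
        have := hεD d hd
        dsimp only
        omega
      · rw [h, one_smul] at hsum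
        simp only [neg_smul, Finset.sum_neg_distrib]
        exact eq_neg_of_add_eq_zero_left hsum

lemma aux_card {G : Type*} [AddCommGroup G] [DecidableEq G] (B D : Finset G)
    (h : ∀ b ∈ B, ∃ ε : G → ℤ,
      (∀ d ∈ D, ε d = -1 ∨ ε d = 0 ∨ ε d = 1) ∧ b = ∑ d ∈ D, ε d • d) :
    B.card ≤ 3 ^ D.card := by
  classical
  have hsub : B ⊆ (Fintype.piFinset (fun _ : D => ({-1, 0, 1} : Finset ℤ))).image
      (fun e => ∑ d : D, e d • (d : G)) := by
    intro b hb
    obtain ⟨ε, hε, rfl⟩ := h b hb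
    refine Finset.mem_image.mpr ⟨fun d => ε d, ?_, ?_⟩
    · rw [Fintype.mem_piFinset]
      intro d
      simpa using hε d d.2
    · exact Finset.sum_coe_sort D (fun d => ε d • d)
  refine (Finset.card_le_card hsub).trans (Finset.card_image_le.trans ?_)
  rw [Fintype.card_piFinset]
  simp

lemma aux_dirichlet (k : ℕ) (hk : 2 ≤ k) (D : Finset (ZMod k)) (N : ℕ) (hN : 0 < N)
    (h : N ^ D.card < k.minFac) :
    ∃ lam : (ZMod k)ˣ, ∃ m : ZMod k → ℤ, ∀ d ∈ D,
      (m d : ZMod k) = (lam : ZMod k) * d ∧ (N : ℤ) * |m d| ≤ k := by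
  classical
  have : NeZero k := ⟨by omega⟩
  have hk0 : 0 < k := by omega
  obtain ⟨a, ha, b, hb, hab, hf⟩ := Finset.exists_ne_map_eq_of_card_lt_of_maps_to
    (s := Finset.range k.minFac) (t := Fintype.piFinset (fun _ : D => Finset.range N))
    (f := fun n (d : D) => N * ((n : ZMod k) * (d : ZMod k)).val / k)
    (by rw [Fintype.card_piFinset]; simpa using h)
    (by
      intro n _
      simp only [Finset.mem_coe, Fintype.mem_piFinset, Finset.mem_range]
      intro d
      rw [Nat.div_lt_iff_lt_mul hk0]
      exact Nat.mul_lt_mul_of_pos_left (ZMod.val_lt _) hN)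
  wlog hlt : a < b generalizing a b
  · exact this b hb a ha hab.symm hf.symm (by omega)
  have hbp : b < k.minFac := Finset.mem_range.mp hb
  have hcop : Nat.Coprime (b - a) k := by
    by_contra hc
    obtain ⟨q, hq, hq1, hq2⟩ := Nat.Prime.not_coprime_iff_dvd.mp hc
    have h1 := Nat.minFac_le_of_dvd hq.two_le hq2
    have h2 := Nat.le_of_dvd (by omega) hq1
    omega
  refine ⟨ZMod.unitOfCoprime _ hcop, fun d => (((b : ZMod k) * d).val : ℤ) - (((a : ZMod k) * d).val : ℤ), ?_⟩
  intro d hd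
  constructor
  · rw [ZMod.coe_unitOfCoprime, Nat.cast_sub hlt.le]
    push_cast
    simp only [ZMod.natCast_val, ZMod.cast_id', id_eq]
    ring
  · have h1 := congrFun hf ⟨d, hd⟩
    dsimp only at h1 ⊢
    generalize ((b : ZMod k) * d).val = x at *
    generalize ((a : ZMod k) * d).val = y at *
    have e1 := Nat.div_add_mod (N * x) k
    have e2 := Nat.div_add_mod (N * y) k
    have l1 := Nat.mod_lt (N * x) hk0
    have l2 := Nat.mod_lt (N * y) hk0
    rw [h1] at e2
    have : (N : ℤ) * |(x : ℤ) - y| = |((N * x : ℕ) : ℤ) - ((N * y : ℕ) : ℤ)| := by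
      push_cast
      rw [← mul_sub, abs_mul, Nat.abs_cast]
    rw [this, abs_le]
    constructor <;> omega

lemma aux_num (r p : ℕ) (hp : 2 ≤ p)
    (h : (r : ℝ) < 1 / 3 * (Real.log (p : ℝ)) ^ ((1 : ℝ) / 2)) :
    (100 * (r + 1) * 3 ^ r) ^ r < p := by
  have h1 : (100 * (r + 1) * 3 ^ r) ^ r ≤ 600 ^ (r ^ 2) := by
    rcases Nat.eq_zero_or_pos r with rfl | hr
    · simp
    · rw [pow_two, pow_mul]
      apply Nat.pow_le_pow_left
      have e : (600 : ℕ) ^ r = 100 ^ r * 2 ^ r * 3 ^ r := by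
        rw [← mul_pow, ← mul_pow]
        norm_num
      rw [e]
      have a1 : 100 ≤ 100 ^ r := Nat.le_self_pow (by omega) 100
      have a2 : r + 1 ≤ 2 ^ r := Nat.lt_two_pow_self
      gcongr
  refine lt_of_le_of_lt h1 ?_
  have hp' : (2 : ℝ) ≤ p := by exact_mod_cast hp
  have hlog : 0 ≤ Real.log (p : ℝ) := Real.log_nonneg (by linarith)
  rw [← Real.sqrt_eq_rpow] at h
  have h2 : (9 : ℝ) * r ^ 2 < Real.log p := by
    have := Real.sq_sqrt hlog
    have h0 : (0 : ℝ) ≤ r := Nat.cast_nonneg r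
    nlinarith [Real.sqrt_nonneg (Real.log p)]
  have h3 : Real.log 600 ≤ 9 := by
    have : Real.log 600 ≤ Real.log (2 ^ 10) := Real.log_le_log (by norm_num) (by norm_num)
    rw [Real.log_pow] at this
    have := Real.log_two_lt_d9
    push_cast at *
    linarith
  have h4 : Real.log ((600 : ℝ) ^ (r ^ 2)) < Real.log p := by
    rw [Real.log_pow]
    push_cast
    nlinarith [sq_nonneg (r : ℝ)]
  have h5 := (Real.log_lt_log_iff (by positivity) (by linarith)).mp h4
  exact_mod_cast h5

theorem rectification_lemma :
    ∃ c₁ : ℝ, 0 < c₁ ∧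
      ∀ k : ℕ, 2 ≤ k →
        ∀ B : Finset (ZMod k), B.Nonempty →
          (dimension B : ℝ) < c₁ * (Real.log (k.minFac : ℝ)) ^ ((1 : ℝ) / 2) →
            ∃ lam : (ZMod k)ˣ, ∀ b ∈ B,
              MemInterval ((lam : ZMod k) * b)
                (-((k : ℝ) / (100 * B.card))) ((k : ℝ) / (100 * B.card)) := by
  refine ⟨1 / 3, by norm_num, ?_⟩
  intro k hk B hB hdim
  obtain ⟨D, hDc, hspan⟩ := aux_span B
  have hcard := aux_card B D hspan
  rw [← hDc] at hdim
  have hnum := aux_num D.card k.minFac (Nat.minFac_prime (by omega)).two_le hdim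
  obtain ⟨lam, m, hm⟩ := aux_dirichlet k hk D _ (by positivity) hnum
  refine ⟨lam, ?_⟩
  intro b hb
  obtain ⟨ε, hε, hbs⟩ := hspan b hb
  have hBpos : 0 < B.card := hB.card_pos
  set r := D.card with hr
  have key : ((100 * (r + 1) * 3 ^ r : ℕ) : ℤ) * |∑ d ∈ D, ε d * m d| ≤ r * k := by
    calc ((100 * (r + 1) * 3 ^ r : ℕ) : ℤ) * |∑ d ∈ D, ε d * m d|
        ≤ ((100 * (r + 1) * 3 ^ r : ℕ) : ℤ) * ∑ d ∈ D, |m d| := by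
          refine mul_le_mul_of_nonneg_left ?_ (by positivity)
          refine (Finset.abs_sum_le_sum_abs _ _).trans (Finset.sum_le_sum fun d hd => ?_)
          rcases hε d hd with h | h | h <;> simp [h]
      _ = ∑ d ∈ D, ((100 * (r + 1) * 3 ^ r : ℕ) : ℤ) * |m d| := Finset.mul_sum _ _ _
      _ ≤ ∑ d ∈ D, (k : ℤ) := Finset.sum_le_sum fun d hd => (hm d hd).2
      _ = r * k := by simp [hr]
  have key2 : (100 * 3 ^ r : ℤ) * |∑ d ∈ D, ε d * m d| < k := by
    have hkpos : (0 : ℤ) < k := by exact_mod_cast (by omega : 0 < k)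
    have hr1 : (0 : ℤ) < (r : ℤ) + 1 := by positivity
    refine lt_of_mul_lt_mul_left (a := (r : ℤ) + 1) ?_ hr1.le
    push_cast at key
    nlinarith
  have key3 : (100 * B.card : ℤ) * |∑ d ∈ D, ε d * m d| < k := by
    refine lt_of_le_of_lt ?_ key2
    refine mul_le_mul_of_nonneg_right ?_ (abs_nonneg _)
    have : (B.card : ℤ) ≤ 3 ^ r := by exact_mod_cast hcard
    linarith
  have key4 : |((∑ d ∈ D, ε d * m d : ℤ) : ℝ)| < (k : ℝ) / (100 * B.card) := by
    rw [lt_div_iff₀ (by positivity), mul_comm]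
    exact_mod_cast key3
  refine ⟨∑ d ∈ D, ε d * m d, ?_, (abs_lt.mp key4).1, (abs_lt.mp key4).2⟩
  rw [hbs, Finset.mul_sum]
  push_cast
  refine Finset.sum_congr rfl fun d hd => ?_
  rw [(hm d hd).1, zsmul_eq_mul]
  ring
end

section
/- Let k ≥ 2 be an integer with least prime divisor p, and let x_1, …, x_r ∈ ℤ_k. Then there exist distinct λ_1, λ_2 ∈ {0, 1, …, p−1} such that ‖λ_1 x_i − λ_2 x_i‖ ≤ k / p^{1/r} for every 1 ≤ i ≤ r. -/
/-- For `y ∈ ZMod k`, `zmodNorm y` is the distance from any integer representative of `y`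
to the nearest multiple of `k`, i.e. `min {|m| : m ∈ ℤ, m ≡ y (mod k)}`. -/
def zmodNorm {k : ℕ} (y : ZMod k) : ℕ :=
  min y.val (k - y.val)

theorem zmodNorm_sub_le_aux (k t a b : ℕ) (ht : t < k) (ha : a ≤ t) (hb : b ≤ t) :
    zmodNorm ((b : ZMod k) - (a : ZMod k)) ≤ t := by
  unfold zmodNorm
  rcases le_total a b with h | h
  · have e : (b : ZMod k) - (a : ZMod k) = ((b - a : ℕ) : ZMod k) := by
      rw [Nat.cast_sub h]
    rw [e, ZMod.val_natCast, Nat.mod_eq_of_lt (by omega)]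
    exact (min_le_left _ _).trans (by omega)
  · rcases h.eq_or_lt with h | h
    · subst h
      simp
    · have e : (b : ZMod k) - (a : ZMod k) = ((k - (a - b) : ℕ) : ZMod k) := by
        rw [Nat.cast_sub (by omega), Nat.cast_sub h.le]
        simp
      rw [e, ZMod.val_natCast, Nat.mod_eq_of_lt (by omega)]
      exact (min_le_right _ _).trans (by omega)

/-- Pigeonhole step: for `k ≥ 2` with least prime divisor `p` and `x_1, …, x_r ∈ ℤ_k`,
there exist distinct `λ₁, λ₂ ∈ {0, 1, …, p-1}` with
`‖λ₁ x_i - λ₂ x_i‖ ≤ k / p^(1/r)` for every `i`. -/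
theorem pigeonhole_dilates (k : ℕ) (hk : 2 ≤ k) (r : ℕ) (x : Fin r → ZMod k) :
    ∃ lam₁ lam₂ : ℕ, lam₁ < k.minFac ∧ lam₂ < k.minFac ∧ lam₁ ≠ lam₂ ∧
      ∀ i : Fin r,
        (zmodNorm ((lam₁ : ZMod k) * x i - (lam₂ : ZMod k) * x i) : ℝ) ≤
          (k : ℝ) / (k.minFac : ℝ) ^ ((1 : ℝ) / (r : ℝ)) := by
  have hp : 2 ≤ k.minFac := (Nat.minFac_prime (by omega)).two_le
  generalize k.minFac = p at hp ⊢
  rcases Nat.eq_zero_or_pos r with hr | hr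
  · subst hr
    exact ⟨0, 1, by omega, by omega, by omega, fun i => i.elim0⟩
  have : NeZero k := ⟨by omega⟩
  have hpr : (1 : ℝ) < p := by exact_mod_cast hp
  have hkr : (0 : ℝ) < k := by exact_mod_cast (by omega : 0 < k)
  have hrr : (0 : ℝ) < r := by exact_mod_cast hr
  set q : ℝ := (p : ℝ) ^ ((1 : ℝ) / (r : ℝ)) with hq
  have hq1 : 1 < q := Real.one_lt_rpow hpr (by positivity)
  have hqr : q ^ r = p := by
    rw [hq, one_div]
    exact Real.rpow_inv_natCast_pow (by positivity) (by omega)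
  set t : ℕ := ⌊(k : ℝ) / q⌋₊ with htdef
  have htle : (t : ℝ) ≤ (k : ℝ) / q := Nat.floor_le (by positivity)
  have htlt : (k : ℝ) / q < t + 1 := Nat.lt_floor_add_one _
  have htk : t < k := by
    have : (t : ℝ) < k := htle.trans_lt (div_lt_self hkr hq1)
    exact_mod_cast this
  have hcard : k ^ r < p * (t + 1) ^ r := by
    have h1 : (k : ℝ) < q * (t + 1) := by
      rw [div_lt_iff₀ (by linarith)] at htlt
      linarith
    have h2 := pow_lt_pow_left₀ h1 hkr.le (n := r) (by omega)
    rw [mul_pow, hqr] at h2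
    exact_mod_cast h2
  let f : Fin p × (Fin r → Fin (t + 1)) → (Fin r → ZMod k) :=
    fun z i => ((z.1 : ℕ) : ZMod k) * x i + ((z.2 i : ℕ) : ZMod k)
  obtain ⟨⟨l, a⟩, ⟨m, b⟩, hne, hf⟩ := Fintype.exists_ne_map_eq_of_card_lt f (by
    simpa [ZMod.card] using hcard)
  have hfi : ∀ i, ((l : ℕ) : ZMod k) * x i + ((a i : ℕ) : ZMod k) =
    ((m : ℕ) : ZMod k) * x i + ((b i : ℕ) : ZMod k) := fun i => congrFun hf i
  refine ⟨l, m, l.2, m.2, ?_, fun i => ?_⟩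
  · intro hlm
    apply hne
    have hlm' : l = m := Fin.ext hlm
    subst hlm'
    congr 1
    funext i
    have h := add_left_cancel (hfi i)
    rw [ZMod.natCast_eq_natCast_iff'] at h
    have h1 := (a i).2
    have h2 := (b i).2
    rw [Nat.mod_eq_of_lt (by omega), Nat.mod_eq_of_lt (by omega)] at h
    exact Fin.ext h
  · have e : ((l : ℕ) : ZMod k) * x i - ((m : ℕ) : ZMod k) * x i =
        ((b i : ℕ) : ZMod k) - ((a i : ℕ) : ZMod k) := by
      linear_combination hfi i
    rw [e]
    have := zmodNorm_sub_le_aux k t (a i) (b i) htk (by omega) (by omega)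
    exact (Nat.cast_le.mpr this).trans htle
end

section
/- Let s ≥ 1 be an integer, and for each ℓ ∈ {1, …, s} let Q_ℓ := {2ℓ−1, 2ℓ, 2s+2ℓ−1, 2s+2ℓ} ⊆ {1, …, 4s}. Then for every nonempty proper interval [i, j] ⊆ {1, …, 4s} (i.e. 1 ≤ i ≤ j ≤ 4s with [i,j] ≠ {1,…,4s}), there exists ℓ ∈ {1, …, s} such that [i, j] contains at least one element of Q_ℓ but does not contain all of Q_ℓ. -/
/-- Combinatorial property of the deterministic rearrangement: for `s ≥ 1` and
`Q_ℓ := {2ℓ-1, 2ℓ, 2s+2ℓ-1, 2s+2ℓ}` (for `1 ≤ ℓ ≤ s`), every nonempty proper interval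
`[i, j] ⊆ {1, …, 4s}` contains at least one element of some `Q_ℓ` without containing
all of `Q_ℓ`. -/
theorem rearrangement_interval_property (s : ℕ) (hs : 1 ≤ s)
    (i j : ℕ) (hi : 1 ≤ i) (hij : i ≤ j) (hj : j ≤ 4 * s)
    (hproper : ¬(i = 1 ∧ j = 4 * s)) :
    ∃ ℓ : ℕ, 1 ≤ ℓ ∧ ℓ ≤ s ∧
      ((Finset.Icc i j) ∩
        ({2 * ℓ - 1, 2 * ℓ, 2 * s + 2 * ℓ - 1, 2 * s + 2 * ℓ} : Finset ℕ)).Nonempty ∧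
      ¬ (({2 * ℓ - 1, 2 * ℓ, 2 * s + 2 * ℓ - 1, 2 * s + 2 * ℓ} : Finset ℕ) ⊆
        Finset.Icc i j) := by
  have key : ∀ ℓ x y : ℕ, 1 ≤ ℓ → ℓ ≤ s → i ≤ x → x ≤ j →
      (x = 2 * ℓ - 1 ∨ x = 2 * ℓ ∨ x = 2 * s + 2 * ℓ - 1 ∨ x = 2 * s + 2 * ℓ) →
      (y < i ∨ j < y) →
      (y = 2 * ℓ - 1 ∨ y = 2 * ℓ ∨ y = 2 * s + 2 * ℓ - 1 ∨ y = 2 * s + 2 * ℓ) →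
      ∃ ℓ : ℕ, 1 ≤ ℓ ∧ ℓ ≤ s ∧
      ((Finset.Icc i j) ∩
        ({2 * ℓ - 1, 2 * ℓ, 2 * s + 2 * ℓ - 1, 2 * s + 2 * ℓ} : Finset ℕ)).Nonempty ∧
      ¬ (({2 * ℓ - 1, 2 * ℓ, 2 * s + 2 * ℓ - 1, 2 * s + 2 * ℓ} : Finset ℕ) ⊆
        Finset.Icc i j) := by
    intro ℓ x y h1 h2 hx1 hx2 hx hy1 hy
    refine ⟨ℓ, h1, h2, ⟨x, ?_⟩, fun h => ?_⟩
    · simp only [Finset.mem_inter, Finset.mem_Icc, Finset.mem_insert, Finset.mem_singleton]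
      exact ⟨⟨hx1, hx2⟩, hx⟩
    · have := @h y (by
        simp only [Finset.mem_insert, Finset.mem_singleton]
        exact hy)
      rw [Finset.mem_Icc] at this
      omega
  by_cases h1 : i = 1
  · by_cases h2 : j < 2 * s + 2
    · exact key 1 1 (2 * s + 2) (by omega) (by omega) (by omega) (by omega) (by omega)
        (by omega) (by omega)
    · exact key s (2 * s) (4 * s) (by omega) (by omega) (by omega) (by omega) (by omega)
        (by omega) (by omega)
  · by_cases h2 : 2 * s + 2 < i
    · exact key ((i - 2 * s + 1) / 2) i (2 * ((i - 2 * s + 1) / 2)) (by omega) (by omega)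
        (by omega) (by omega) (by omega) (by omega) (by omega)
    · by_cases h3 : 2 * s + 2 ≤ j
      · exact key 1 (2 * s + 2) 1 (by omega) (by omega) (by omega) (by omega) (by omega)
          (by omega) (by omega)
      · by_cases h4 : i ≤ 2 * s
        · exact key ((i + 1) / 2) i (2 * s + 2 * ((i + 1) / 2)) (by omega) (by omega)
            (by omega) (by omega) (by omega) (by omega) (by omega)
        · exact key 1 i 1 (by omega) (by omega) (by omega) (by omega) (by omega)
            (by omega) (by omega)
end
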